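/- arXiv:2405.14914 — 3 statements merged into one kernel-verified Lean document; each statement's English description precedes it below -/
import Mathlib

section
/- Let Q be a finite multigraph with nonempty vertex set. Then Q is 2-connected if and only if for every partition of Q₀ into s ≥ 2 nonempty parts I₁, …, I_s one has b(Q) > b(Q|_{I₁}) + ⋯ + b(Q|_{I_s}). -/
/-- A finite quiver (equivalently, a finite multigraph with a chosen orientation of each
edge): finitely many vertices and arrows, with source and target maps. -/
structure FinQuiver where
  V : Type
  E : Type
  [fintypeV : Fintype V]
  [fintypeE : Fintype E]
  [decEqV : DecidableEq V]
  s : E → V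
  t : E → V

attribute [instance] FinQuiver.fintypeV FinQuiver.fintypeE FinQuiver.decEqV

namespace FinQuiver

/-- The adjacency (simple) graph of the underlying multigraph: two vertices are adjacent
if some edge joins them.  Connectivity of the multigraph only depends on this graph. -/
def adjGraph (G : FinQuiver) : SimpleGraph G.V :=
  SimpleGraph.fromRel fun a b => ∃ e : G.E, G.s e = a ∧ G.t e = b

/-- The number of connected components of the underlying multigraph. -/
noncomputable def c (G : FinQuiver) : ℕ :=
  Nat.card G.adjGraph.ConnectedComponent

/-- The Betti number `b(Q) = c(Q) - #Q₀ + #Q₁` of the underlying multigraph. -/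
noncomputable def betti (G : FinQuiver) : ℤ :=
  (G.c : ℤ) - Fintype.card G.V + Fintype.card G.E

/-- The underlying multigraph is connected. -/
def Connected (G : FinQuiver) : Prop := G.adjGraph.Connected

/-- Deletion of the edge `e`. -/
noncomputable def deleteEdge (G : FinQuiver) (e : G.E) : FinQuiver :=
  letI : DecidableEq G.E := Classical.decEq _
  { V := G.V, E := {e' : G.E // e' ≠ e}, s := fun e' => G.s e'.1, t := fun e' => G.t e'.1 }

/-- The underlying multigraph is 2-connected: it is connected and stays connected after
deleting any single edge. -/
def TwoConnected (G : FinQuiver) : Prop :=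
  G.Connected ∧ ∀ e : G.E, (G.deleteEdge e).Connected

/-- Restriction `Q|_I` to a subset `I` of the vertices (full sub(multi)graph). -/
noncomputable def restrictV (G : FinQuiver) (I : Set G.V) : FinQuiver :=
  letI : DecidablePred (· ∈ I) := Classical.decPred _
  { V := ↥I
    E := {e : G.E // G.s e ∈ I ∧ G.t e ∈ I}
    s := fun e => ⟨G.s e.1, e.2.1⟩
    t := fun e => ⟨G.t e.1, e.2.2⟩ }

/-- Restriction `Q|_J` to a subset `J` of the edges (keeping all vertices). -/
noncomputable def restrictE (G : FinQuiver) (J : Set G.E) : FinQuiver :=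
  letI : DecidablePred (· ∈ J) := Classical.decPred _
  { V := G.V
    E := ↥J
    s := fun e => G.s e.1
    t := fun e => G.t e.1 }

end FinQuiver

/-!
For an edge set `J` write `Q|_J` for `Q` with only the edges of `J`. Adding one edge to `J` merges
at most two components, so `b(Q|_J)` is monotone in `J`; and if `Q` is connected, then
`b(Q - e) < b(Q)` exactly when `Q - e` is still connected. Hence `Q` is 2-connected if and only if
`b(Q|_J) < b(Q)` for every `J` such that `Q|_J` is disconnected.

For a partition of the vertices, `∑ b(Q|_{I_i}) = b(Q|_J)`, where `J` consists of the edges with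
both endpoints in the same part, and this `Q|_J` is disconnected. Conversely, if `Q|_K` is
disconnected, then partitioning into its components gives an edge set `J ⊇ K`, so that
`b(Q|_K) ≤ ∑ b(Q|_{I_i})`.
-/

namespace FinQuiver

variable {G : FinQuiver}

theorem connectedComponentMk_s_eq_t (e : G.E) :
    G.adjGraph.connectedComponentMk (G.s e) = G.adjGraph.connectedComponentMk (G.t e) := by
  by_cases h : G.s e = G.t e
  · rw [h]
  · exact SimpleGraph.ConnectedComponent.connectedComponentMk_eq_of_adj
      ((SimpleGraph.fromRel_adj _ _ _).2 ⟨h, Or.inl ⟨e, rfl, rfl⟩⟩)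

theorem eq_of_reachable {κ : Type*} {f : G.V → κ} (hf : ∀ e, f (G.s e) = f (G.t e)) {u v : G.V}
    (h : G.adjGraph.Reachable u v) : f u = f v := by
  rw [SimpleGraph.reachable_iff_reflTransGen] at h
  induction h with
  | refl => rfl
  | tail _ hadj ih =>
    obtain ⟨-, ⟨e, rfl, rfl⟩ | ⟨e, rfl, rfl⟩⟩ := (SimpleGraph.fromRel_adj _ _ _).1 hadj
    · exact ih.trans (hf e)
    · exact ih.trans (hf e).symm

/-- The function on connected components induced by a function on vertices that takes the same
value at both ends of every edge. -/
def componentLift {κ : Type*} (f : G.V → κ) (hf : ∀ e, f (G.s e) = f (G.t e)) :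
    G.adjGraph.ConnectedComponent → κ :=
  Quot.lift f fun _ _ => eq_of_reachable hf

theorem connected_iff_c_eq_one : G.Connected ↔ G.c = 1 := by
  rw [c, Nat.card_eq_one_iff_unique]
  constructor
  · intro h
    have := h.nonempty
    exact ⟨h.preconnected.subsingleton_connectedComponent, inferInstance⟩
  · rintro ⟨_, ⟨C⟩⟩
    exact (SimpleGraph.connected_iff _).2
      ⟨fun _ _ => SimpleGraph.ConnectedComponent.exact (Subsingleton.elim _ _), ⟨C.out⟩⟩

theorem connected_iff_c_le_one [Nonempty G.V] : G.Connected ↔ G.c ≤ 1 := by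
  have hpos : 0 < G.c := Nat.card_pos
  rw [connected_iff_c_eq_one]
  omega

section RestrictE

variable {J K : Set G.E} {e : G.E}

theorem betti_restrictE (J : Set G.E) :
    (G.restrictE J).betti = (G.restrictE J).c - Fintype.card G.V + J.ncard := by
  rw [betti, ← Nat.card_eq_fintype_card (α := (G.restrictE J).E)]
  rfl

theorem adjGraph_restrictE_univ : (G.restrictE Set.univ).adjGraph = G.adjGraph := by
  ext u v
  simp [adjGraph, restrictE]

theorem c_restrictE_univ : (G.restrictE Set.univ).c = G.c := by
  rw [c, c]
  exact congrArg (fun H : SimpleGraph G.V => Nat.card H.ConnectedComponent) adjGraph_restrictE_univ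

theorem connected_restrictE_univ : (G.restrictE Set.univ).Connected ↔ G.Connected := by
  rw [connected_iff_c_eq_one, connected_iff_c_eq_one, c_restrictE_univ]

theorem betti_restrictE_univ : (G.restrictE Set.univ).betti = G.betti := by
  rw [betti_restrictE, c_restrictE_univ, Set.ncard_univ, Nat.card_eq_fintype_card, betti]

theorem ncard_compl_singleton_add_one (e : G.E) :
    ({e}ᶜ : Set G.E).ncard + 1 = Fintype.card G.E := by
  rw [← Nat.card_eq_fintype_card, ← Set.ncard_add_ncard_compl {e}, Set.ncard_singleton, add_comm]

theorem connected_deleteEdge_iff :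
    (G.deleteEdge e).Connected ↔ (G.restrictE {e}ᶜ).Connected :=
  Iff.rfl

theorem c_restrictE_le_c_restrictE_insert_add_one (J : Set G.E) (e : G.E) :
    (G.restrictE J).c ≤ (G.restrictE (insert e J)).c + 1 := by
  classical
  let mk : G.V → (G.restrictE J).adjGraph.ConnectedComponent :=
    (G.restrictE J).adjGraph.connectedComponentMk
  -- Redirecting the component of `t e` to that of `s e` also identifies the two ends of `e`.
  let f : G.V → (G.restrictE J).adjGraph.ConnectedComponent :=
    fun v => if mk v = mk (G.t e) then mk (G.s e) else mk v
  have hf : ∀ e' : ↥(insert e J), f (G.s e') = f (G.t e') := by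
    rintro ⟨e', rfl | he'⟩
    · simp [f]
    · have hmk : mk (G.s e') = mk (G.t e') :=
        connectedComponentMk_s_eq_t (G := G.restrictE J) ⟨e', he'⟩
      simp only [f, hmk]
  let F : Option (G.restrictE (insert e J)).adjGraph.ConnectedComponent →
      (G.restrictE J).adjGraph.ConnectedComponent :=
    fun o => o.elim (mk (G.t e)) (componentLift (G := G.restrictE (insert e J)) f hf)
  have hF : Function.Surjective F := by
    refine SimpleGraph.ConnectedComponent.ind fun v => ?_
    by_cases hv : mk v = mk (G.t e)
    · exact ⟨none, hv.symm⟩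
    · exact ⟨some ((G.restrictE (insert e J)).adjGraph.connectedComponentMk v), if_neg hv⟩
  exact (Nat.card_le_card_of_surjective F hF).trans_eq Finite.card_option

theorem betti_restrictE_le_betti_restrictE_insert (he : e ∉ J) :
    (G.restrictE J).betti ≤ (G.restrictE (insert e J)).betti := by
  have hc := c_restrictE_le_c_restrictE_insert_add_one J e
  rw [betti_restrictE, betti_restrictE, Set.ncard_insert_of_notMem he]
  omega

theorem betti_restrictE_mono (h : J ⊆ K) : (G.restrictE J).betti ≤ (G.restrictE K).betti := by
  classical
  have hmono : Monotone fun S : Finset G.E => (G.restrictE S).betti :=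
    Finset.monotone_iff_forall_le_insert.2 fun S e he => by
      simpa only [Finset.coe_insert] using
        betti_restrictE_le_betti_restrictE_insert (Finset.mem_coe.not.2 he)
  simpa only [Set.coe_toFinset] using hmono (Set.toFinset_mono h)

theorem Connected.connected_deleteEdge_iff_betti_lt (hG : G.Connected) :
    (G.deleteEdge e).Connected ↔ (G.restrictE {e}ᶜ).betti < G.betti := by
  have : Nonempty (G.restrictE {e}ᶜ).V := hG.nonempty
  have hcard := ncard_compl_singleton_add_one e
  rw [connected_deleteEdge_iff, connected_iff_c_le_one, betti_restrictE, betti,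
    connected_iff_c_eq_one.1 hG]
  omega

theorem twoConnected_iff_betti_restrictE_lt :
    G.TwoConnected ↔
      ∀ J : Set G.E, ¬ (G.restrictE J).Connected → (G.restrictE J).betti < G.betti := by
  constructor
  · rintro ⟨hG, hdel⟩ J hJ
    obtain ⟨e, he⟩ : ∃ e, e ∉ J := by
      by_contra! hall
      rw [Set.eq_univ_of_forall hall, connected_restrictE_univ] at hJ
      exact hJ hG
    calc (G.restrictE J).betti
      _ ≤ (G.restrictE {e}ᶜ).betti := betti_restrictE_mono (Set.subset_compl_singleton_iff.2 he)
      _ < G.betti := hG.connected_deleteEdge_iff_betti_lt.1 (hdel e)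
  · intro h
    have hG : G.Connected := by
      by_contra hG
      exact (h _ (connected_restrictE_univ.not.2 hG)).ne betti_restrictE_univ
    refine ⟨hG, fun e => ?_⟩
    by_contra hdel
    exact hdel (hG.connected_deleteEdge_iff_betti_lt.2 (h _ hdel))

end RestrictE

section Partition

variable {ι : Type*} (P : G.V → ι)

/-- The edges with both endpoints in the same part of a vertex partition, the parts being the
fibres of `P`. -/
def internalEdges : Set G.E :=
  {e | P (G.s e) = P (G.t e)}

/-- The connected component of a vertex within its part. -/
noncomputable def partComponentMk (v : G.V) :
    Σ i, (G.restrictV {w | P w = i}).adjGraph.ConnectedComponent :=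
  ⟨P v, (G.restrictV {w | P w = P v}).adjGraph.connectedComponentMk ⟨v, rfl⟩⟩

variable {P} in
theorem partComponentMk_eq {v : G.V} {i : ι} (hv : P v = i) :
    partComponentMk P v =
      ⟨i, (G.restrictV {w | P w = i}).adjGraph.connectedComponentMk ⟨v, hv⟩⟩ := by
  subst hv
  rfl

theorem partComponentMk_s_eq_t (e : internalEdges P) :
    partComponentMk P (G.s e) = partComponentMk P (G.t e) := by
  rw [partComponentMk_eq (show P (G.s e) = P (G.t e) from e.2), partComponentMk_eq rfl]
  exact congrArg (Sigma.mk _) (connectedComponentMk_s_eq_t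
    (G := G.restrictV {w | P w = P (G.t e)}) ⟨e, e.2, rfl⟩)

/-- The components of the parts are the components of the multigraph of internal edges. -/
noncomputable def sigmaComponentEquiv :
    (Σ i, (G.restrictV {v | P v = i}).adjGraph.ConnectedComponent) ≃
      (G.restrictE (internalEdges P)).adjGraph.ConnectedComponent where
  toFun x := componentLift (G := G.restrictV {v | P v = x.1})
    (fun v => (G.restrictE (internalEdges P)).adjGraph.connectedComponentMk v.1)
    (fun e => connectedComponentMk_s_eq_t (G := G.restrictE (internalEdges P))
      ⟨e.1, e.2.1.trans e.2.2.symm⟩) x.2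
  invFun := componentLift (G := G.restrictE (internalEdges P)) (partComponentMk P)
    (partComponentMk_s_eq_t P)
  left_inv := by
    rintro ⟨i, C⟩
    induction C using SimpleGraph.ConnectedComponent.ind with
    | h v => exact partComponentMk_eq v.2
  right_inv := SimpleGraph.ConnectedComponent.ind fun _ => rfl

/-- The edges of the parts are the internal edges. -/
def sigmaEdgeEquiv : (Σ i, (G.restrictV {v | P v = i}).E) ≃ internalEdges P where
  toFun x := ⟨x.2.1, x.2.2.1.trans x.2.2.2.symm⟩
  invFun e := ⟨P (G.t e), e.1, e.2, rfl⟩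
  left_inv := by
    rintro ⟨i, e, hs, ht⟩
    obtain rfl : P (G.t e) = i := ht
    rfl
  right_inv _ := rfl

theorem sum_betti_restrictV [Fintype ι] :
    ∑ i, (G.restrictV {v | P v = i}).betti = (G.restrictE (internalEdges P)).betti := by
  have hc : ∑ i, (G.restrictV {v | P v = i}).c = (G.restrictE (internalEdges P)).c :=
    Nat.card_sigma.symm.trans (Nat.card_congr (sigmaComponentEquiv P))
  have hV : ∑ i, Nat.card (G.restrictV {v | P v = i}).V = Nat.card G.V :=
    Nat.card_sigma.symm.trans (Nat.card_congr (Equiv.sigmaFiberEquiv P))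
  have hE : ∑ i, Nat.card (G.restrictV {v | P v = i}).E = (internalEdges P).ncard :=
    Nat.card_sigma.symm.trans (Nat.card_congr (sigmaEdgeEquiv P))
  rw [betti_restrictE]
  simp only [betti, ← Nat.card_eq_fintype_card, Finset.sum_add_distrib, Finset.sum_sub_distrib,
    ← Nat.cast_sum, hc, hV, hE]

variable {P} in
theorem not_connected_restrictE_internalEdges [Nontrivial ι] (hP : Function.Surjective P) :
    ¬ (G.restrictE (internalEdges P)).Connected := by
  intro h
  obtain ⟨i, j, hij⟩ := exists_pair_ne ι
  obtain ⟨u, rfl⟩ := hP i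
  obtain ⟨v, rfl⟩ := hP j
  exact hij (eq_of_reachable (G := G.restrictE (internalEdges P)) (fun e => e.2)
    (h.preconnected u v))

theorem subset_internalEdges_connectedComponentMk (K : Set G.E) :
    K ⊆ internalEdges (G.restrictE K).adjGraph.connectedComponentMk :=
  fun e he => connectedComponentMk_s_eq_t (G := G.restrictE K) ⟨e, he⟩

theorem betti_restrictE_le_sum_betti_component (K : Set G.E)
    [Fintype (G.restrictE K).adjGraph.ConnectedComponent] :
    (G.restrictE K).betti ≤ ∑ C : (G.restrictE K).adjGraph.ConnectedComponent,
      (G.restrictV {v | (G.restrictE K).adjGraph.connectedComponentMk v = C}).betti :=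
  (betti_restrictE_mono (subset_internalEdges_connectedComponentMk K)).trans_eq
    (sum_betti_restrictV _).symm

end Partition

end FinQuiver

/-- A finite multigraph with nonempty vertex set is 2-connected if and
only if for every partition of its vertex set into `s ≥ 2` nonempty parts `I₁, …, I_s`
(encoded by a surjection `P` onto an index type with at least two elements, the parts
being the fibres of `P`) one has `b(Q) > b(Q|_{I₁}) + ⋯ + b(Q|_{I_s})`. -/
theorem twoConnected_iff_betti_gt (G : FinQuiver) (hV : Nonempty G.V) :
    G.TwoConnected ↔
      ∀ (ι : Type) [Fintype ι] (P : G.V → ι), Function.Surjective P →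
        2 ≤ Fintype.card ι →
        (∑ i : ι, (G.restrictV {v | P v = i}).betti) < G.betti := by
  rw [FinQuiver.twoConnected_iff_betti_restrictE_lt]
  refine ⟨fun h ι _ P hP hι => ?_, fun h K hK => ?_⟩
  · have : Nontrivial ι := Fintype.one_lt_card_iff_nontrivial.1 hι
    rw [FinQuiver.sum_betti_restrictV]
    exact h _ (FinQuiver.not_connected_restrictE_internalEdges hP)
  · let := Fintype.ofFinite (G.restrictE K).adjGraph.ConnectedComponent
    have hcard : 2 ≤ Fintype.card (G.restrictE K).adjGraph.ConnectedComponent := by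
      have : Nonempty (G.restrictE K).V := hV
      rw [FinQuiver.connected_iff_c_le_one, not_le, FinQuiver.c, Nat.card_eq_fintype_card] at hK
      exact hK
    exact (FinQuiver.betti_restrictE_le_sum_betti_component K).trans_lt
      (h _ _ Quot.mk_surjective hcard)
end

section
/- Let Q be a finite quiver whose underlying multigraph is 2-connected, and let q be a prime power. Then the real sequences α ↦ q^{−α·b(Q)} · A_{(Q,α),1̲}(q) and α ↦ q^{−α(2·#Q₁ − #Q₀ + 1)} · B_{(Q,α)}(q) both converge as α → ∞, and their limits A_Q and B_{μ_Q} satisfy B_{μ_Q}/(1 − q^{−1})^{#Q₀} = A_Q/(1 − q^{−1}). -/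
/-- The ring of truncated polynomials `F[t]/(t^α)`. -/
abbrev TruncRing (F : Type) [CommRing F] (α : ℕ) : Type :=
  Polynomial F ⧸ Ideal.span {(Polynomial.X : Polynomial F) ^ α}

/-- The image of `t` in `F[t]/(t^α)`. -/
noncomputable def tvar (F : Type) [CommRing F] (α : ℕ) : TruncRing F α :=
  Ideal.Quotient.mk _ (Polynomial.X : Polynomial F)
/-- The gauge relation on rank-`1̲` representations of the quiver `G` over the commutative
ring `R`: `x` and `y` are related iff they differ by the change-of-basis action of
`(Rˣ)^{Q₀}`, `(u·x)_a := u_{t(a)} x_a u_{s(a)}⁻¹`. -/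
def GaugeRel (G : FinQuiver) (R : Type) [CommRing R] (x y : G.E → R) : Prop :=
  ∃ u : G.V → Rˣ, ∀ a : G.E, y a = (u (G.t a) : R) * x a * ((u (G.s a))⁻¹ : Rˣ)

/-- `A_{(Q,α),1̲}(q)`: the number of orbits of tuples `x ∈ R^{Q₁}` whose support multigraph
(vertex set `Q₀`, edge set `{a | x_a ≠ 0}`) is connected, under the action of `(Rˣ)^{Q₀}`;
that is, the number of isomorphism classes of indecomposable locally free rank-`1̲`
representations of `Q` over `R`. -/
noncomputable def KacCount (G : FinQuiver) (R : Type) [CommRing R] : ℕ :=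
  Nat.card (Quot (fun x y : {x : G.E → R // (G.restrictE {a | x a ≠ 0}).Connected} =>
    GaugeRel G R x.1 y.1))

/-- `B_{(Q,α)}(q)`: the number of pairs `(x,y) ∈ R^{Q₁} × R^{Q₁}` satisfying the rank-`1̲`
moment map equations `∑_{a : t(a)=i} x_a y_a = ∑_{a : s(a)=i} x_a y_a` for every vertex `i`. -/
noncomputable def BCount (G : FinQuiver) (R : Type) [CommRing R] : ℕ :=
  Nat.card {xy : (G.E → R) × (G.E → R) //
    ∀ i : G.V, (∑ a : G.E, if G.t a = i then xy.1 a * xy.2 a else 0)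
             = ∑ a : G.E, if G.s a = i then xy.1 a * xy.2 a else 0}

/-!
Let `R = 𝔽_q[t]/(t^α)`, fix a vertex `ρ`, and call `w : Q₀ → R` with `w ρ = 0` a potential; write
`(dw)_a = w_{t(a)} - w_{s(a)}`. Let `Z_α` be the sum over all potentials of `∏_a 1 / #(R (dw)_a)`.

For fixed `x`, duality of finite `R`-modules expresses the number of `y` with `μ(x, y) = 0` through
the number of potentials with `x · dw = 0`. Summing over `x` shows that the normalised moment map
count is exactly `Z_α`. If `x` has connected support then, `R` being local, its stabiliser has
`#Rˣ` times as many elements as there are such potentials; so by Burnside's lemma the normalised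
orbit count is `(1 - q⁻¹)^(1 - #Q₀)` times the part of `Z_α` coming from connected supports.

It remains to see that `Z_α` converges and that disconnected supports do not matter in the limit.
Multiplication by `t` embeds the potentials modulo `t^α` into those modulo `t^(α+1)` and preserves
their weights; a potential outside the image has `(dw)_e` invertible for some arrow `e`, which costs
a factor `q^(-α-1)`. An `x` with disconnected support has `x_e = 0` for some arrow `e`, which again
costs `q^(-α)`. What is left in both cases is the analogue of `Z` for `Q` with `e` deleted. That
quiver is connected because `Q` is 2-connected, and discarding the weights off a spanning tree
bounds its sum by `(α + 1)^(#Q₀ - 1)`, so both errors are summable in `α`.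
-/

-- Low priority, so that quivers keep the `Fintype` instances bundled with them.
attribute [local instance 10] Fintype.ofFinite

theorem sum_comp_le_sum_of_injective {X Y S : Type*} [Fintype X] [Fintype Y] [AddCommMonoid S]
    [PartialOrder S] [IsOrderedAddMonoid S] {i : X → Y} (hi : Function.Injective i) {f : Y → S}
    (hf : ∀ y, 0 ≤ f y) : ∑ x, f (i x) ≤ ∑ y, f y :=
  (Finset.sum_map Finset.univ ⟨i, hi⟩ f).symm.trans_le <|
    Finset.sum_le_sum_of_subset_of_nonneg (Finset.subset_univ _) fun y _ _ => hf y

namespace FinQuiver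

variable {G : FinQuiver}

section Connectivity

theorem adjGraph_adj_iff {u v : G.V} :
    G.adjGraph.Adj u v ↔ u ≠ v ∧ ∃ e, G.s e = u ∧ G.t e = v ∨ G.s e = v ∧ G.t e = u := by
  simp only [adjGraph, SimpleGraph.fromRel_adj, ← exists_or]

theorem Connected.vertex_induction (hG : G.Connected) {ρ : G.V} {P : G.V → Prop} (hρ : P ρ)
    (h : ∀ a, P (G.s a) ↔ P (G.t a)) (v : G.V) : P v := by
  obtain ⟨p⟩ := hG.preconnected ρ v
  induction p with
  | nil => exact hρ
  | cons hadj _ ih =>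
    refine ih ?_
    obtain ⟨-, e, ⟨rfl, rfl⟩ | ⟨rfl, rfl⟩⟩ := adjGraph_adj_iff.1 hadj
    · exact (h e).1 hρ
    · exact (h e).2 hρ

theorem restrictE_connected_of_adj {H : SimpleGraph G.V} (hH : H.Connected) {J : Set G.E}
    (hJ : ∀ u v, H.Adj u v → ∃ e ∈ J, G.s e = u ∧ G.t e = v ∨ G.s e = v ∧ G.t e = u) :
    (G.restrictE J).Connected := by
  refine hH.mono (G' := (G.restrictE J).adjGraph) fun u v huv => ?_
  obtain ⟨e, he, h⟩ := hJ u v huv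
  exact adjGraph_adj_iff.2 ⟨huv.ne, ⟨e, he⟩, h⟩

theorem Connected.restrictE_of_forall_mem (hG : G.Connected) {J : Set G.E} (hJ : ∀ e, e ∈ J) :
    (G.restrictE J).Connected :=
  restrictE_connected_of_adj hG fun _ _ huv =>
    (adjGraph_adj_iff.1 huv).2.imp fun e he => ⟨hJ e, he⟩

theorem Connected.exists_spanning_tree (hG : G.Connected) :
    ∃ J : Set G.E, (G.restrictE J).Connected ∧
      Fintype.card (G.restrictE J).E = Fintype.card G.V - 1 := by
  classical
  obtain ⟨T, hTG, hT⟩ := SimpleGraph.Connected.exists_isTree_le hG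
  have arrow : ∀ d : T.edgeSet, ∃ e, s(G.s e, G.t e) = d.1 := by
    rintro ⟨⟨u, v⟩, huv⟩
    exact (adjGraph_adj_iff.1 (hTG huv)).2.imp fun e he => Sym2.eq_iff.2 he
  choose e he using arrow
  refine ⟨Set.range e, restrictE_connected_of_adj hT.connected fun u v huv =>
    ⟨_, Set.mem_range_self ⟨s(u, v), huv⟩, Sym2.eq_iff.1 (he ⟨s(u, v), huv⟩)⟩, ?_⟩
  have he_inj : Function.Injective e := fun d d' h => Subtype.ext (by rw [← he d, ← he d', h])
  rw [← Nat.card_eq_fintype_card]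
  refine (Nat.card_range_of_injective he_inj).trans ?_
  rw [Nat.card_eq_fintype_card, ← SimpleGraph.edgeFinset_card]
  exact Nat.eq_sub_of_add_eq hT.card_edgeFinset

end Connectivity

section Potentials

variable {M N : Type*} [AddCommGroup M] [AddCommGroup N]

/-- The differences of a vertex function along the arrows: the simplicial coboundary
`M^{Q₀} → M^{Q₁}`. -/
def coboundary (w : G.V → M) (a : G.E) : M := w (G.t a) - w (G.s a)

variable (G) in
/-- Vertex functions normalised to vanish at `ρ`; on a connected quiver these represent the
vertex functions modulo constants. -/
abbrev Potential (ρ : G.V) (M : Type*) [AddCommGroup M] : Type _ := {w : G.V → M // w ρ = 0}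

variable (G) in
/-- The partition function `∑_w ∏_a f((dw)_a)` of potentials with edge weight `f`. -/
noncomputable def potentialSum [Finite M] (ρ : G.V) (f : M → ℝ) : ℝ :=
  ∑ w : G.Potential ρ M, ∏ a, f (G.coboundary w.1 a)

variable (G) in
/-- The sum over all arrows of the partition functions of the quivers with that arrow deleted. -/
noncomputable def deletionSum [Finite M] (ρ : G.V) (f : M → ℝ) : ℝ :=
  ∑ e : G.E, (G.deleteEdge e).potentialSum ρ f

theorem Connected.mem_of_coboundary_mem (hG : G.Connected) {ρ : G.V} {S : AddSubgroup M}
    {w : G.Potential ρ M} (hw : ∀ a, G.coboundary w.1 a ∈ S) (v : G.V) : w.1 v ∈ S :=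
  hG.vertex_induction (P := fun v => w.1 v ∈ S) (by rw [w.2]; exact zero_mem S)
    (fun a => (add_mem_cancel_left (hw a)).symm.trans (by rw [coboundary, sub_add_cancel])) v

theorem Connected.injective_coboundary (hG : G.Connected) (ρ : G.V) :
    Function.Injective fun w : G.Potential ρ M => G.coboundary w.1 := by
  intro w w' h
  refine Subtype.ext (funext (hG.vertex_induction (w.2.trans w'.2.symm) fun a => ?_))
  have ha : w.1 (G.t a) - w.1 (G.s a) = w'.1 (G.t a) - w'.1 (G.s a) := congrFun h a
  grind

theorem potentialSum_nonneg [Finite M] (ρ : G.V) {f : M → ℝ} (hf : ∀ m, 0 ≤ f m) :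
    0 ≤ G.potentialSum ρ f :=
  Finset.sum_nonneg fun _ _ => Finset.prod_nonneg fun _ _ => hf _

theorem Connected.potentialSum_le_pow_card_edges [Finite M] (hG : G.Connected) (ρ : G.V)
    {f : M → ℝ} (hf : ∀ m, 0 ≤ f m) :
    G.potentialSum ρ f ≤ (∑ m, f m) ^ Fintype.card G.E := by
  have := Classical.decEq G.E
  calc G.potentialSum ρ f ≤ ∑ y : G.E → M, ∏ a, f (y a) :=
        sum_comp_le_sum_of_injective (hG.injective_coboundary ρ)
          (f := fun y : G.E → M => ∏ a, f (y a)) fun _ => Finset.prod_nonneg fun _ _ => hf _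
    _ = (∑ m, f m) ^ Fintype.card G.E := by
        rw [← Fintype.piFinset_univ, ← Finset.prod_univ_sum (fun _ => Finset.univ) fun _ => f,
          Finset.prod_const, Finset.card_univ]

theorem potentialSum_le_restrictE [Finite M] (ρ : G.V) {f : M → ℝ} (h0 : ∀ m, 0 ≤ f m)
    (h1 : ∀ m, f m ≤ 1) (J : Set G.E) :
    G.potentialSum ρ f ≤ (G.restrictE J).potentialSum ρ f := by
  classical
  refine Finset.sum_le_sum fun w _ => ?_
  calc ∏ a, f (G.coboundary w.1 a)
      ≤ ∏ a with a ∈ J, f (G.coboundary w.1 a) :=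
        Finset.prod_le_prod_of_subset_of_le_one (Finset.filter_subset _ _) (fun _ _ => h0 _)
          fun _ _ _ => h1 _
    _ = ∏ a : J, f (G.coboundary w.1 a) := Finset.prod_subtype _ (by simp) _
    _ = ∏ a, f ((G.restrictE J).coboundary w.1 a) :=
        Fintype.prod_equiv (Equiv.refl _) _ _ fun _ => rfl

theorem Connected.potentialSum_le [Finite M] (hG : G.Connected) (ρ : G.V) {f : M → ℝ}
    (h0 : ∀ m, 0 ≤ f m) (h1 : ∀ m, f m ≤ 1) :
    G.potentialSum ρ f ≤ (∑ m, f m) ^ (Fintype.card G.V - 1) := by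
  obtain ⟨J, hJ, hcard⟩ := hG.exists_spanning_tree
  calc G.potentialSum ρ f ≤ (G.restrictE J).potentialSum ρ f := potentialSum_le_restrictE ρ h0 h1 J
    _ ≤ (∑ m, f m) ^ Fintype.card (G.restrictE J).E := hJ.potentialSum_le_pow_card_edges ρ h0
    _ = (∑ m, f m) ^ (Fintype.card G.V - 1) := by rw [hcard]

theorem TwoConnected.deletionSum_le [Finite M] (hG : G.TwoConnected) (ρ : G.V) {f : M → ℝ}
    (h0 : ∀ m, 0 ≤ f m) (h1 : ∀ m, f m ≤ 1) :
    G.deletionSum ρ f ≤ Fintype.card G.E * (∑ m, f m) ^ (Fintype.card G.V - 1) := by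
  rw [deletionSum, ← nsmul_eq_mul, ← Finset.card_univ]
  exact Finset.sum_le_card_nsmul _ _ _ fun e _ => (hG.2 e).potentialSum_le ρ h0 h1

theorem prod_edges_eq_mul_prod_deleteEdge (f : M → ℝ) (w : G.V → M) (e : G.E) :
    ∏ a, f (G.coboundary w a) =
      f (G.coboundary w e) * ∏ a, f ((G.deleteEdge e).coboundary w a) := by
  classical
  exact Fintype.prod_eq_mul_prod_subtype_ne (fun a => f (G.coboundary w a)) e

variable (G) in
/-- Push a potential forward along a homomorphism of coefficient groups. -/
def Potential.map (ρ : G.V) (φ : M →+ N) (w : G.Potential ρ M) : G.Potential ρ N :=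
  ⟨φ ∘ w.1, (congrArg φ w.2).trans (map_zero φ)⟩

theorem Potential.map_injective (ρ : G.V) {φ : M →+ N} (hφ : Function.Injective φ) :
    Function.Injective (Potential.map G ρ φ) := fun _ _ h =>
  Subtype.ext (hφ.comp_left (congrArg Subtype.val h))

theorem Potential.coboundary_map (ρ : G.V) (φ : M →+ N) (w : G.Potential ρ M) (a : G.E) :
    G.coboundary (Potential.map G ρ φ w).1 a = φ (G.coboundary w.1 a) :=
  (map_sub φ _ _).symm

theorem Connected.exists_coboundary_notMem_range (hG : G.Connected) {ρ : G.V} {φ : M →+ N}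
    (hφ : Function.Injective φ) {w : G.Potential ρ N} (hw : w ∉ Set.range (Potential.map G ρ φ)) :
    ∃ e, G.coboundary w.1 e ∉ φ.range := by
  contrapose! hw
  have hrange : ∀ v, w.1 v ∈ φ.range := hG.mem_of_coboundary_mem hw
  choose w' hw' using hrange
  exact ⟨⟨w', hφ (by rw [hw', w.2, map_zero])⟩, Subtype.ext (funext hw')⟩

theorem Connected.prod_coboundary_le_sum_deleteEdge (hG : G.Connected) {ρ : G.V} {φ : M →+ N}
    (hφ : Function.Injective φ) {g : N → ℝ} (hg : ∀ n, 0 ≤ g n) {c : ℝ} (hc : 0 ≤ c)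
    (hgc : ∀ n ∉ φ.range, g n ≤ c) {w : G.Potential ρ N}
    (hw : w ∉ Set.range (Potential.map G ρ φ)) :
    ∏ a, g (G.coboundary w.1 a) ≤ ∑ e, c * ∏ a, g ((G.deleteEdge e).coboundary w.1 a) := by
  obtain ⟨e, he⟩ := hG.exists_coboundary_notMem_range hφ hw
  have hprod (e : G.E) : 0 ≤ ∏ a, g ((G.deleteEdge e).coboundary w.1 a) :=
    Finset.prod_nonneg fun _ _ => hg _
  calc ∏ a, g (G.coboundary w.1 a)
      = g (G.coboundary w.1 e) * ∏ a, g ((G.deleteEdge e).coboundary w.1 a) :=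
        prod_edges_eq_mul_prod_deleteEdge g w.1 e
    _ ≤ c * ∏ a, g ((G.deleteEdge e).coboundary w.1 a) :=
        mul_le_mul_of_nonneg_right (hgc _ he) (hprod e)
    _ ≤ ∑ e, c * ∏ a, g ((G.deleteEdge e).coboundary w.1 a) :=
        Finset.single_le_sum (fun e _ => mul_nonneg hc (hprod e)) (Finset.mem_univ e)

theorem Connected.abs_potentialSum_sub_comp_le [Finite M] [Finite N] (hG : G.Connected) (ρ : G.V)
    {φ : M →+ N} (hφ : Function.Injective φ) {g : N → ℝ} (hg : ∀ n, 0 ≤ g n) {c : ℝ}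
    (hc : 0 ≤ c) (hgc : ∀ n ∉ φ.range, g n ≤ c) :
    |G.potentialSum ρ g - G.potentialSum ρ (g ∘ φ)| ≤ c * G.deletionSum ρ g := by
  have := Classical.decEq (G.Potential ρ N)
  let I : Finset (G.Potential ρ N) := Finset.univ.image (Potential.map G ρ φ)
  have hsub : G.potentialSum ρ g - G.potentialSum ρ (g ∘ φ) =
      ∑ w ∈ Iᶜ, ∏ a, g (G.coboundary w.1 a) := by
    rw [sub_eq_iff_eq_add, potentialSum, ← Finset.sum_compl_add_sum I,
      Finset.sum_image (Potential.map_injective ρ hφ).injOn]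
    simp only [Potential.coboundary_map, potentialSum, Function.comp_apply]
  rw [hsub, abs_of_nonneg (Finset.sum_nonneg fun _ _ => Finset.prod_nonneg fun _ _ => hg _)]
  calc ∑ w ∈ Iᶜ, ∏ a, g (G.coboundary w.1 a)
      ≤ ∑ w ∈ Iᶜ, ∑ e, c * ∏ a, g ((G.deleteEdge e).coboundary w.1 a) :=
        Finset.sum_le_sum fun w hw => hG.prod_coboundary_le_sum_deleteEdge hφ hg hc hgc
          (by simpa [I] using hw)
    _ ≤ ∑ w : G.Potential ρ N, ∑ e, c * ∏ a, g ((G.deleteEdge e).coboundary w.1 a) :=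
        Finset.sum_le_sum_of_subset_of_nonneg (Finset.subset_univ _) fun _ _ _ =>
          Finset.sum_nonneg fun _ _ => mul_nonneg hc (Finset.prod_nonneg fun _ _ => hg _)
    _ = c * G.deletionSum ρ g := by
        rw [Finset.sum_comm, deletionSum, Finset.mul_sum]
        exact Finset.sum_congr rfl fun e _ => (Finset.mul_sum _ _ _).symm

end Potentials

end FinQuiver

section FiniteCounting

theorem sum_natCard_subtype_comm {X Y : Type*} [Fintype X] [Fintype Y] (r : X → Y → Prop) :
    ∑ x, Nat.card {y // r x y} = ∑ y, Nat.card {x // r x y} := by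
  rw [← Nat.card_sigma, ← Nat.card_sigma]
  exact Nat.card_congr <| (Equiv.subtypeProdEquivSigmaSubtype r).symm.trans <|
    ((Equiv.prodComm X Y).subtypeEquiv fun _ => Iff.rfl).trans <|
    Equiv.subtypeProdEquivSigmaSubtype fun y x => r x y

theorem natCard_orbits_mul_natCard_group {H X : Type*} [Group H] [Finite H] [Finite X]
    [MulAction H X] :
    Nat.card (MulAction.orbitRel.Quotient H X) * Nat.card H =
      ∑ x : X, Nat.card (MulAction.stabilizer H x) := by
  rw [← Nat.card_prod, ← Nat.card_congr (MulAction.sigmaFixedByEquivOrbitsProdGroup H X),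
    Nat.card_sigma]
  exact sum_natCard_subtype_comm fun (h : H) (x : X) => h • x = x

section Duality

variable {R m n : Type*} [CommRing R] [Finite R] [Fintype m] [Fintype n] {ψ : AddChar R ℂ}

open scoped Matrix in
theorem sum_addChar_dotProduct [DecidableEq R] [DecidableEq n] (hψ : ψ.IsPrimitive) (c : n → R) :
    ∑ v : n → R, ψ (v ⬝ᵥ c) = if c = 0 then (Nat.card R : ℂ) ^ Fintype.card n else 0 := by
  have hprod (v : n → R) : ψ (v ⬝ᵥ c) = ∏ i, ψ (v i * c i) :=
    map_prod ψ.toMonoidHom (fun i => Multiplicative.ofAdd (v i * c i)) Finset.univ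
  simp_rw [hprod]
  rw [← Fintype.piFinset_univ, ← Finset.prod_univ_sum (fun _ => Finset.univ)
    fun i r => ψ (r * c i)]
  simp_rw [fun i => AddChar.sum_mulShift (c i) hψ]
  split_ifs with hc
  · simp [hc]
  · obtain ⟨i, hi⟩ := Function.ne_iff.1 hc
    exact Finset.prod_eq_zero (Finset.mem_univ i) (by simp [show c i ≠ 0 from hi])

open scoped Matrix in
theorem natCard_ker_mulVec_mul_pow (hψ : ψ.IsPrimitive) (A : Matrix m n R) :
    Nat.card {v : n → R // A *ᵥ v = 0} * Nat.card R ^ Fintype.card m =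
      Nat.card {w : m → R // w ᵥ* A = 0} * Nat.card R ^ Fintype.card n := by
  classical
  have hsum : ∑ v : n → R, ∑ w : m → R, ψ (w ⬝ᵥ A *ᵥ v) =
      ∑ w : m → R, ∑ v : n → R, ψ (v ⬝ᵥ w ᵥ* A) := by
    rw [Finset.sum_comm]
    simp_rw [Matrix.dotProduct_mulVec, dotProduct_comm]
  simp_rw [sum_addChar_dotProduct hψ, ← Finset.sum_filter, Finset.sum_const, nsmul_eq_mul] at hsum
  simp only [Nat.card_eq_fintype_card, Fintype.card_subtype] at hsum ⊢
  exact_mod_cast hsum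

theorem exists_isPrimitive_of_forall_dvd {s : R} (hs : s ≠ 0) (hdvd : ∀ r ≠ 0, r ∣ s) :
    ∃ ψ : AddChar R ℂ, ψ.IsPrimitive := by
  obtain ⟨ψ, hψ⟩ := AddChar.exists_apply_ne_zero.2 hs
  refine ⟨ψ, fun r hr h => hψ ?_⟩
  obtain ⟨b, rfl⟩ := hdvd r hr
  simpa using DFunLike.congr_fun h b

end Duality

section AnnDensity

variable {R : Type*} [CommRing R]

/-- The proportion of elements of a finite ring `R` annihilating `r`, written as `1 / #(r R)`. -/
noncomputable def annDensity (r : R) : ℝ := (Nat.card (Ideal.span {r}) : ℝ)⁻¹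

theorem annDensity_nonneg (r : R) : 0 ≤ annDensity r := by
  rw [annDensity]; positivity

theorem annDensity_le_one [Finite R] (r : R) : annDensity r ≤ 1 :=
  inv_le_one_of_one_le₀ (by exact_mod_cast Nat.card_pos)

theorem annDensity_of_isUnit {r : R} (hr : IsUnit r) : annDensity r = (Nat.card R : ℝ)⁻¹ := by
  rw [annDensity, Ideal.span_singleton_eq_top.2 hr]
  exact congrArg _ (congrArg _ (Nat.card_congr Submodule.topEquiv.toEquiv))

theorem natCard_annihilator [Finite R] (r : R) :
    (Nat.card {z : R // z * r = 0} : ℝ) = Nat.card R * annDensity r := by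
  have h := Submodule.card_eq_card_quotient_mul_card (LinearMap.toSpanSingleton R R r).ker
  rw [Nat.card_congr (LinearMap.toSpanSingleton R R r).quotKerEquivRange.toEquiv,
    LinearMap.range_toSpanSingleton] at h
  rw [annDensity, ← div_eq_mul_inv, eq_div_iff (by exact_mod_cast Nat.card_pos.ne')]
  exact_mod_cast h.symm

end AnnDensity

end FiniteCounting

namespace FinQuiver

variable {G : FinQuiver} {R : Type} [CommRing R]

/-- The number of potentials `w` with `x · dw = 0`; these form the Lie algebra of the stabiliser
of `x`, modulo constants. -/
noncomputable def rootedKerCard (ρ : G.V) (x : G.E → R) : ℕ :=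
  Nat.card {w : G.Potential ρ R // ∀ a, x a * G.coboundary w.1 a = 0}

theorem natCard_ker_coboundary (ρ : G.V) (x : G.E → R) :
    Nat.card {w : G.V → R // ∀ a, x a * G.coboundary w a = 0} =
      Nat.card R * rootedKerCard ρ x := by
  rw [rootedKerCard, ← Nat.card_prod]
  exact Nat.card_congr
    { toFun := fun w => (w.1 ρ, ⟨⟨fun i => w.1 i - w.1 ρ, sub_self _⟩, fun a => by
        simpa [coboundary] using w.2 a⟩)
      invFun := fun p => ⟨fun i => p.1 + p.2.1.1 i, fun a => by
        simpa [coboundary] using p.2.2 a⟩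
      left_inv := fun w => by simp
      right_inv := fun ⟨c, ⟨w, hw⟩, _⟩ => by simp [hw] }

theorem sum_rootedKerCard [Finite R] (ρ : G.V) :
    ∑ x : G.E → R, (rootedKerCard ρ x : ℝ) =
      (Nat.card R : ℝ) ^ Fintype.card G.E * G.potentialSum ρ (annDensity (R := R)) := by
  have hw (w : G.Potential ρ R) :
      (Nat.card {x : G.E → R // ∀ a, x a * G.coboundary w.1 a = 0} : ℝ) =
        (Nat.card R : ℝ) ^ Fintype.card G.E * ∏ a, annDensity (G.coboundary w.1 a) := by
    rw [Nat.card_congr (Equiv.subtypePiEquivPi (p := fun a r => r * G.coboundary w.1 a = 0)),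
      Nat.card_pi, Nat.cast_prod]
    simp only [natCard_annihilator, Finset.prod_mul_distrib, Finset.prod_const, Finset.card_univ]
  rw [potentialSum, Finset.mul_sum, ← Finset.sum_congr rfl fun w _ => hw w, ← Nat.cast_sum,
    ← Nat.cast_sum]
  exact congrArg _ (sum_natCard_subtype_comm fun (x : G.E → R) (w : G.Potential ρ R) =>
    ∀ a, x a * G.coboundary w.1 a = 0)

section MomentMap

variable (G) in
/-- The matrix of `y ↦ μ(x, y)`, the rank-`1` moment map at a fixed representation `x`. -/
def momentMatrix (x : G.E → R) : Matrix G.V G.E R :=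
  fun i a => (if G.t a = i then x a else 0) - if G.s a = i then x a else 0

theorem momentMatrix_mulVec_eq_zero_iff (x y : G.E → R) :
    (G.momentMatrix x).mulVec y = 0 ↔ ∀ i, (∑ a, if G.t a = i then x a * y a else 0) =
      ∑ a, if G.s a = i then x a * y a else 0 := by
  simp only [funext_iff, Matrix.mulVec, dotProduct, momentMatrix, sub_mul, ite_mul, zero_mul,
    Finset.sum_sub_distrib, Pi.zero_apply, sub_eq_zero]

theorem vecMul_momentMatrix (x : G.E → R) (w : G.V → R) (a : G.E) :
    (Matrix.vecMul w (G.momentMatrix x)) a = x a * G.coboundary w a := by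
  simp only [Matrix.vecMul, dotProduct, momentMatrix, coboundary, mul_sub, mul_ite, mul_zero,
    Finset.sum_sub_distrib, Finset.sum_ite_eq, Finset.mem_univ, if_true, mul_comm]

theorem bCount_mul_pow [Finite R] (ρ : G.V) {ψ : AddChar R ℂ} (hψ : ψ.IsPrimitive) :
    BCount G R * Nat.card R ^ Fintype.card G.V =
      Nat.card R ^ (Fintype.card G.E + 1) * ∑ x : G.E → R, rootedKerCard ρ x := by
  have hfibre (x : G.E → R) :
      Nat.card {y // (G.momentMatrix x).mulVec y = 0} * Nat.card R ^ Fintype.card G.V =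
        Nat.card R ^ (Fintype.card G.E + 1) * rootedKerCard ρ x := by
    rw [natCard_ker_mulVec_mul_pow hψ, pow_succ, mul_assoc, ← natCard_ker_coboundary, mul_comm]
    simp only [funext_iff, vecMul_momentMatrix, Pi.zero_apply]
  have hB : BCount G R = ∑ x : G.E → R, Nat.card {y // (G.momentMatrix x).mulVec y = 0} := by
    rw [← Nat.card_sigma]
    exact Nat.card_congr <| .trans
      (Equiv.subtypeEquivRight fun xy : (G.E → R) × (G.E → R) =>
        (momentMatrix_mulVec_eq_zero_iff xy.1 xy.2).symm)
      (Equiv.subtypeProdEquivSigmaSubtype fun x y => (G.momentMatrix x).mulVec y = 0)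
  rw [hB, Finset.sum_mul, Finset.mul_sum]
  exact Finset.sum_congr rfl fun x _ => hfibre x

end MomentMap

section Gauge

variable (G R) in
/-- Rank-`1` representations with connected support, i.e. the indecomposable ones. -/
abbrev ConnectedRep : Type := {x : G.E → R // (G.restrictE {a | x a ≠ 0}).Connected}

instance : MulAction (G.V → Rˣ) (G.ConnectedRep R) where
  smul u x := ⟨fun a => (u (G.t a) : R) * x.1 a * ((u (G.s a))⁻¹ : Rˣ), by simpa using x.2⟩
  one_smul x := Subtype.ext <| funext fun a => by
    change ((1 : Rˣ) : R) * x.1 a * ((1 : Rˣ)⁻¹ : Rˣ) = x.1 a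
    simp
  mul_smul u v x := Subtype.ext <| funext fun a => by
    change ((u (G.t a) * v (G.t a) : Rˣ) : R) * x.1 a * ((u (G.s a) * v (G.s a))⁻¹ : Rˣ) =
      (u (G.t a) : R) * ((v (G.t a) : R) * x.1 a * ((v (G.s a))⁻¹ : Rˣ)) * ((u (G.s a))⁻¹ : Rˣ)
    rw [mul_inv]; push_cast; ring

theorem ConnectedRep.smul_apply (u : G.V → Rˣ) (x : G.ConnectedRep R) (a : G.E) :
    (u • x).1 a = (u (G.t a) : R) * x.1 a * ((u (G.s a))⁻¹ : Rˣ) := rfl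

theorem ConnectedRep.mem_stabilizer_iff {x : G.ConnectedRep R} {u : G.V → Rˣ} :
    u ∈ MulAction.stabilizer (G.V → Rˣ) x ↔ ∀ a,
      x.1 a * G.coboundary (fun i => (u i : R)) a = 0 := by
  simp only [MulAction.mem_stabilizer_iff, Subtype.ext_iff, funext_iff, smul_apply, coboundary,
    Units.mul_inv_eq_iff_eq_mul, mul_sub, sub_eq_zero]
  exact forall_congr' fun a => by rw [mul_comm]

theorem ConnectedRep.isUnit_add [IsLocalRing R] (x : G.ConnectedRep R) {ρ : G.V}
    {w : G.Potential ρ R} (hw : ∀ a, x.1 a * G.coboundary w.1 a = 0) (c : Rˣ) (i : G.V) :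
    IsUnit ((c : R) + w.1 i) := by
  have hmem : w.1 i ∈ IsLocalRing.maximalIdeal R :=
    x.2.mem_of_coboundary_mem (w := w) (S := (IsLocalRing.maximalIdeal R).toAddSubgroup)
      (fun ⟨a, ha⟩ hu => ha (hu.mul_left_eq_zero.1 (hw a))) i
  by_contra hc
  exact (add_mem_cancel_right hmem).1 ((IsLocalRing.mem_maximalIdeal _).2 hc) c.isUnit

theorem ConnectedRep.natCard_stabilizer [IsLocalRing R] (ρ : G.V) (x : G.ConnectedRep R) :
    Nat.card (MulAction.stabilizer (G.V → Rˣ) x) = Nat.card Rˣ * rootedKerCard ρ x.1 := by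
  rw [rootedKerCard, ← Nat.card_prod]
  refine Nat.card_congr <| Equiv.symm
    { toFun := fun p => ⟨fun i => (x.isUnit_add p.2.2 p.1 i).unit, mem_stabilizer_iff.2 fun a => ?_⟩
      invFun := fun u => (u.1 ρ, ⟨⟨fun i => (u.1 i : R) - u.1 ρ, sub_self _⟩, fun a => ?_⟩)
      left_inv := fun ⟨c, ⟨w, hw⟩, _⟩ => ?_
      right_inv := fun u => ?_ }
  · simpa [coboundary] using p.2.2 a
  · simpa [coboundary] using mem_stabilizer_iff.1 u.2 a
  · ext <;> simp [hw]
  · ext; simp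

theorem kacCount_eq_natCard_orbits :
    KacCount G R = Nat.card (MulAction.orbitRel.Quotient (G.V → Rˣ) (G.ConnectedRep R)) := by
  refine Nat.card_congr (Quot.congrRight fun x y => ?_)
  refine .trans ?_ (Setoid.comm' (MulAction.orbitRel (G.V → Rˣ) (G.ConnectedRep R)) (x := y))
  exact exists_congr fun u => by
    simp only [Subtype.ext_iff, funext_iff, ConnectedRep.smul_apply, eq_comm]

theorem kacCount_mul_pow [Finite R] [IsLocalRing R] (ρ : G.V) :
    KacCount G R * Nat.card Rˣ ^ Fintype.card G.V =
      Nat.card Rˣ * ∑ x : G.ConnectedRep R, rootedKerCard ρ x.1 := by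
  rw [kacCount_eq_natCard_orbits, Finset.mul_sum, ← Nat.card_eq_fintype_card (α := G.V),
    ← Nat.card_fun, natCard_orbits_mul_natCard_group]
  exact Finset.sum_congr rfl fun x _ => x.natCard_stabilizer ρ

end Gauge

section ConnectedSupport

theorem rootedKerCard_deleteEdge (ρ : G.V) {x : G.E → R} {e : G.E} (hx : x e = 0) :
    rootedKerCard (G := G.deleteEdge e) ρ (fun a => x a.1) = rootedKerCard ρ x := by
  refine Nat.card_congr (Equiv.subtypeEquivRight fun w => ?_)
  refine ⟨fun h a => ?_, fun h a => h a.1⟩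
  by_cases ha : a = e
  · rw [ha, hx, zero_mul]
  · exact h ⟨a, ha⟩

theorem card_edges_deleteEdge (e : G.E) :
    Fintype.card (G.deleteEdge e).E + 1 = Fintype.card G.E := by
  have h : Fintype.card (G.deleteEdge e).E = Fintype.card G.E - 1 :=
    @Set.card_ne_eq _ _ e (G.deleteEdge e).fintypeE
  rw [h, Nat.sub_add_cancel (Fintype.card_pos_iff.2 ⟨e⟩)]

theorem Connected.exists_apply_eq_zero (hG : G.Connected) {x : G.E → R}
    (hx : ¬ (G.restrictE {a | x a ≠ 0}).Connected) : ∃ e, x e = 0 := by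
  contrapose! hx
  exact hG.restrictE_of_forall_mem hx

theorem sum_rootedKerCard_of_apply_eq_zero_le [Finite R] (ρ : G.V) (e : G.E) :
    ∑ x : {x : G.E → R // x e = 0}, (rootedKerCard ρ x.1 : ℝ) ≤
      (Nat.card R : ℝ) ^ Fintype.card G.E *
        ((Nat.card R : ℝ)⁻¹ * (G.deleteEdge e).potentialSum ρ (annDensity (R := R))) := by
  have hR : (Nat.card R : ℝ) ≠ 0 := by exact_mod_cast Nat.card_pos.ne'
  have hinj : Function.Injective fun (x : {x : G.E → R // x e = 0}) (a : (G.deleteEdge e).E) =>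
      x.1 a.1 := by
    refine fun x x' h => Subtype.ext (funext fun a => ?_)
    by_cases ha : a = e
    · rw [ha, x.2, x'.2]
    · exact congrFun h ⟨a, ha⟩
  rw [← card_edges_deleteEdge e, pow_succ, mul_assoc, mul_inv_cancel_left₀ hR]
  simp only [← fun x : {x : G.E → R // x e = 0} => rootedKerCard_deleteEdge ρ x.2]
  exact (sum_comp_le_sum_of_injective hinj fun _ => Nat.cast_nonneg _).trans
    (sum_rootedKerCard (G := G.deleteEdge e) ρ).le

theorem Connected.sum_rootedKerCard_le [Finite R] (hG : G.Connected) (ρ : G.V) :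
    ∑ x : G.E → R, rootedKerCard ρ x ≤ ∑ x : G.ConnectedRep R, rootedKerCard ρ x.1 +
      ∑ e, ∑ x : {x : G.E → R // x e = 0}, rootedKerCard ρ x.1 := by
  let π : G.ConnectedRep R ⊕ (Σ e, {x : G.E → R // x e = 0}) → G.E → R :=
    Sum.elim Subtype.val fun z => z.2.1
  have hπ : Function.Surjective π := fun x => by
    by_cases hx : (G.restrictE {a | x a ≠ 0}).Connected
    · exact ⟨.inl ⟨x, hx⟩, rfl⟩
    · obtain ⟨e, he⟩ := hG.exists_apply_eq_zero hx
      exact ⟨.inr ⟨e, x, he⟩, rfl⟩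
  calc ∑ x, rootedKerCard ρ x
      = ∑ x, rootedKerCard ρ (π (Function.surjInv hπ x)) := by simp only [Function.surjInv_eq]
    _ ≤ ∑ z, rootedKerCard ρ (π z) :=
        sum_comp_le_sum_of_injective (f := fun z => rootedKerCard ρ (π z))
          (Function.injective_surjInv hπ) fun _ => Nat.zero_le _
    _ = _ := by rw [Fintype.sum_sum_type, Fintype.sum_sigma]; rfl

variable (G R) in
/-- The average of `rootedKerCard` over all representations, with the representations of
disconnected support discarded; a rescaling of the Kac count. -/
noncomputable def connectedDensity [Finite R] (ρ : G.V) : ℝ :=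
  (∑ x : G.ConnectedRep R, (rootedKerCard ρ x.1 : ℝ)) / (Nat.card R : ℝ) ^ Fintype.card G.E

theorem connectedDensity_le_potentialSum [Finite R] (ρ : G.V) :
    G.connectedDensity R ρ ≤ G.potentialSum ρ (annDensity (R := R)) := by
  have hR : (0 : ℝ) < Nat.card R := by exact_mod_cast Nat.card_pos
  rw [connectedDensity, div_le_iff₀' (by positivity), ← sum_rootedKerCard]
  exact sum_comp_le_sum_of_injective Subtype.val_injective fun _ => Nat.cast_nonneg _

theorem Connected.potentialSum_le_connectedDensity_add [Finite R] (hG : G.Connected) (ρ : G.V) :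
    G.potentialSum ρ (annDensity (R := R)) ≤
      G.connectedDensity R ρ + (Nat.card R : ℝ)⁻¹ * G.deletionSum ρ (annDensity (R := R)) := by
  have hR : (0 : ℝ) < Nat.card R := by exact_mod_cast Nat.card_pos
  have hpow : (0 : ℝ) < (Nat.card R : ℝ) ^ Fintype.card G.E := by positivity
  rw [← mul_le_mul_iff_of_pos_left hpow, ← sum_rootedKerCard, mul_add, connectedDensity,
    mul_div_cancel₀ _ hpow.ne', deletionSum, Finset.mul_sum, Finset.mul_sum]
  calc ∑ x : G.E → R, (rootedKerCard ρ x : ℝ)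
      ≤ ∑ x : G.ConnectedRep R, (rootedKerCard ρ x.1 : ℝ) +
          ∑ e, ∑ x : {x : G.E → R // x e = 0}, (rootedKerCard ρ x.1 : ℝ) := by
        exact_mod_cast hG.sum_rootedKerCard_le (R := R) ρ
    _ ≤ _ := by gcongr with e; exact sum_rootedKerCard_of_apply_eq_zero_le ρ e

theorem Connected.abs_connectedDensity_sub_le [Finite R] (hG : G.Connected) (ρ : G.V) :
    |G.connectedDensity R ρ - G.potentialSum ρ (annDensity (R := R))| ≤
      (Nat.card R : ℝ)⁻¹ * G.deletionSum ρ (annDensity (R := R)) := by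
  rw [abs_sub_comm, abs_of_nonneg (sub_nonneg.2 (connectedDensity_le_potentialSum ρ)),
    sub_le_iff_le_add']
  exact hG.potentialSum_le_connectedDensity_add ρ

end ConnectedSupport

section Normalization

theorem Connected.betti_eq (hG : G.Connected) :
    G.betti = 1 - Fintype.card G.V + Fintype.card G.E := by
  have hc : G.c = 1 := by
    have := hG.nonempty
    exact Nat.card_eq_one_iff_unique.2
      ⟨hG.preconnected.subsingleton_connectedComponent, inferInstance⟩
  rw [betti, hc, Nat.cast_one]

theorem zpow_mul_bCount [Finite R] (ρ : G.V) {ψ : AddChar R ℂ} (hψ : ψ.IsPrimitive) :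
    (Nat.card R : ℝ) ^ (-(2 * (Fintype.card G.E : ℤ) - Fintype.card G.V + 1)) * BCount G R =
      G.potentialSum ρ (annDensity (R := R)) := by
  have hR : (Nat.card R : ℝ) ≠ 0 := by exact_mod_cast Nat.card_pos.ne'
  have h : (BCount G R : ℝ) * (Nat.card R : ℝ) ^ Fintype.card G.V =
      (Nat.card R : ℝ) ^ (Fintype.card G.E + 1) * ∑ x : G.E → R, (rootedKerCard ρ x : ℝ) := by
    exact_mod_cast bCount_mul_pow ρ hψ
  have hexp : -(2 * (Fintype.card G.E : ℤ) - Fintype.card G.V + 1) =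
      Fintype.card G.V - (Fintype.card G.E + 1 : ℕ) - Fintype.card G.E := by push_cast; ring
  rw [sum_rootedKerCard] at h
  rw [hexp, zpow_sub₀ hR, zpow_sub₀ hR, zpow_natCast, zpow_natCast, zpow_natCast]
  field_simp
  linear_combination h

theorem Connected.zpow_mul_kacCount [Finite R] [IsLocalRing R] (hG : G.Connected) (ρ : G.V) :
    (Nat.card R : ℝ) ^ (-G.betti) * KacCount G R =
      G.connectedDensity R ρ / ((Nat.card Rˣ : ℝ) / Nat.card R) ^ (Fintype.card G.V - 1) := by
  have hR : (Nat.card R : ℝ) ≠ 0 := by exact_mod_cast Nat.card_pos.ne'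
  have hU : (Nat.card Rˣ : ℝ) ≠ 0 := by exact_mod_cast Nat.card_pos.ne'
  obtain ⟨n, hn⟩ : ∃ n, Fintype.card G.V = n + 1 :=
    Nat.exists_eq_add_one.2 (Fintype.card_pos_iff.2 ⟨ρ⟩)
  have h : (KacCount G R : ℝ) * (Nat.card Rˣ : ℝ) ^ (n + 1) =
      Nat.card Rˣ * ∑ x : G.ConnectedRep R, (rootedKerCard ρ x.1 : ℝ) := by
    rw [← hn]; exact_mod_cast kacCount_mul_pow (R := R) ρ
  have hexp : -G.betti = n - Fintype.card G.E := by rw [hG.betti_eq, hn]; push_cast; ring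
  have hsum : (KacCount G R : ℝ) * (Nat.card Rˣ : ℝ) ^ n =
      ∑ x : G.ConnectedRep R, (rootedKerCard ρ x.1 : ℝ) :=
    mul_left_cancel₀ hU (by rw [← h]; ring)
  rw [hexp, zpow_sub₀ hR, zpow_natCast, zpow_natCast, hn, Nat.add_sub_cancel, connectedDensity,
    ← hsum, div_pow]
  field_simp

end Normalization

end FinQuiver

/-- The truncation `A / (π ^ k)` of `A` at an element `π`; `F[t] / (t ^ k)` is the case `π = t`
of `A = F[t]`. -/
abbrev PowQuotient {A : Type*} [CommRing A] (π : A) (k : ℕ) : Type _ := A ⧸ Ideal.span {π ^ k}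

namespace PowQuotient

variable {A : Type*} [CommRing A] {π : A} {k : ℕ}

variable (π k) in
/-- Multiplication by `π`, as a map `A / (π ^ k) → A / (π ^ (k + 1))`. -/
def shift : PowQuotient π k →ₗ[A] PowQuotient π (k + 1) :=
  Submodule.mapQ _ _ (LinearMap.mulLeft A π) fun p hp => by
    rw [Submodule.mem_comap, LinearMap.mulLeft_apply, Ideal.mem_span_singleton, pow_succ']
    exact mul_dvd_mul_left π (Ideal.mem_span_singleton.1 hp)

theorem shift_mk (p : A) : shift π k (Ideal.Quotient.mk _ p) = Ideal.Quotient.mk _ (π * p) := rfl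

theorem mk_eq_zero_iff {p : A} :
    (Ideal.Quotient.mk _ p : PowQuotient π k) = 0 ↔ π ^ k ∣ p := by
  rw [Ideal.Quotient.eq_zero_iff_mem, Ideal.mem_span_singleton]

theorem mk_mem_range_shift_iff {p : A} :
    Ideal.Quotient.mk _ p ∈ (shift π k).range ↔ p ∈ Ideal.span {π} := by
  rw [Ideal.mem_span_singleton]
  constructor
  · rintro ⟨z, hz⟩
    obtain ⟨s, rfl⟩ := Ideal.Quotient.mk_surjective z
    rw [shift_mk, ← sub_eq_zero, ← map_sub, mk_eq_zero_iff] at hz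
    exact (dvd_sub_right (dvd_mul_right π s)).1 ((dvd_pow_self π k.succ_ne_zero).trans hz)
  · rintro ⟨s, rfl⟩
    exact ⟨Ideal.Quotient.mk _ s, shift_mk s⟩

theorem shift_injective (hπ : π ∈ nonZeroDivisors A) : Function.Injective (shift π k) := by
  rw [injective_iff_map_eq_zero]
  intro r hr
  obtain ⟨p, rfl⟩ := Ideal.Quotient.mk_surjective r
  rw [shift_mk, mk_eq_zero_iff, pow_succ'] at hr
  exact mk_eq_zero_iff.2 ((dvd_cancel_left_mem_nonZeroDivisors hπ).1 hr)

theorem map_shift_span_singleton (r : PowQuotient π k) :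
    shift π k '' (Ideal.span {r} : Ideal (PowQuotient π k)) =
      (Ideal.span {shift π k r} : Ideal (PowQuotient π (k + 1))) := by
  obtain ⟨p, rfl⟩ := Ideal.Quotient.mk_surjective r
  ext z
  simp only [Set.mem_image, SetLike.mem_coe, Ideal.mem_span_singleton']
  constructor
  · rintro ⟨_, ⟨b, rfl⟩, rfl⟩
    obtain ⟨s, rfl⟩ := Ideal.Quotient.mk_surjective b
    exact ⟨Ideal.Quotient.mk _ s, by rw [shift_mk, ← map_mul, ← map_mul, shift_mk, mul_left_comm]⟩
  · rintro ⟨b, rfl⟩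
    obtain ⟨s, rfl⟩ := Ideal.Quotient.mk_surjective b
    exact ⟨_, ⟨Ideal.Quotient.mk _ s, rfl⟩, by
      rw [shift_mk, ← map_mul, ← map_mul, shift_mk, mul_left_comm]⟩

theorem annDensity_shift (hπ : π ∈ nonZeroDivisors A) (r : PowQuotient π k) :
    annDensity (shift π k r) = annDensity r := by
  rw [annDensity, annDensity]
  congr 2
  exact (Nat.card_congr (Equiv.setCongr (map_shift_span_singleton r)).symm).trans
    (Nat.card_image_of_injective (shift_injective hπ) _)

instance : Subsingleton (PowQuotient π 0) := by
  rw [Ideal.Quotient.subsingleton_iff, pow_zero, Ideal.span_singleton_one]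

theorem natCard_eq_pow (hπ : π ∈ nonZeroDivisors A) (k : ℕ) :
    Nat.card (PowQuotient π k) = Nat.card (A ⧸ Ideal.span {π}) ^ k := by
  induction k with
  | zero => rw [pow_zero, Nat.card_unique]
  | succ k ih =>
    have hle : Ideal.span {π ^ (k + 1)} ≤ Ideal.span {π} :=
      Ideal.span_singleton_le_span_singleton.2 (dvd_pow_self π k.succ_ne_zero)
    let f := (Ideal.Quotient.factor hle).toAddMonoidHom
    have hf : Function.Surjective f := Ideal.Quotient.factor_surjective hle
    have hker : f.ker = (shift π k).range.toAddSubgroup := by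
      ext r
      obtain ⟨p, rfl⟩ := Ideal.Quotient.mk_surjective r
      exact Ideal.Quotient.eq_zero_iff_mem.trans mk_mem_range_shift_iff.symm
    rw [← f.ker.card_mul_index, AddSubgroup.index_ker, AddMonoidHom.range_eq_top.2 hf,
      AddSubgroup.card_top, pow_succ (Nat.card (A ⧸ Ideal.span {π})), ← ih]
    congr 1
    exact (congrArg (fun S : AddSubgroup _ => Nat.card S) hker).trans
      (Nat.card_range_of_injective (shift_injective hπ))

variable [(Ideal.span {π}).IsMaximal]

theorem isUnit_iff_notMem_range_shift {r : PowQuotient π (k + 1)} :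
    IsUnit r ↔ r ∉ (shift π k).range := by
  obtain ⟨p, rfl⟩ := Ideal.Quotient.mk_surjective r
  rw [mk_mem_range_shift_iff, ← Ideal.Quotient.isUnit_mk_pow_iff_notMem _ k.succ_ne_zero,
    Ideal.span_singleton_pow]

instance : Nontrivial (PowQuotient π (k + 1)) := by
  rw [Ideal.Quotient.nontrivial_iff, Ne, Ideal.span_singleton_eq_top, isUnit_pow_succ_iff,
    ← Ideal.span_singleton_eq_top]
  exact Ideal.IsMaximal.ne_top ‹_›

instance : IsLocalRing (PowQuotient π (k + 1)) := by
  refine IsLocalRing.of_nonunits_add fun a b ha hb => ?_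
  rw [mem_nonunits_iff, isUnit_iff_notMem_range_shift, not_not] at ha hb ⊢
  exact add_mem ha hb

theorem dvd_mk_pow {r : PowQuotient π (k + 1)} (hr : r ≠ 0) : r ∣ Ideal.Quotient.mk _ (π ^ k) := by
  induction k with
  | zero =>
    refine (isUnit_iff_notMem_range_shift.2 ?_).dvd
    rintro ⟨s, rfl⟩
    exact hr (by rw [Subsingleton.elim s 0, map_zero])
  | succ k ih =>
    by_cases hu : IsUnit r
    · exact hu.dvd
    obtain ⟨s, rfl⟩ := not_not.1 (isUnit_iff_notMem_range_shift.not.1 hu)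
    have hs : s ≠ 0 := fun h => hr (by rw [h, map_zero])
    have h := Set.mem_image_of_mem (shift π (k + 1)) (Ideal.mem_span_singleton.2 (ih hs))
    rw [map_shift_span_singleton, shift_mk, ← pow_succ'] at h
    exact Ideal.mem_span_singleton.1 h

theorem mk_pow_ne_zero (hπ : π ∈ nonZeroDivisors A) :
    (Ideal.Quotient.mk _ (π ^ k) : PowQuotient π (k + 1)) ≠ 0 := by
  rw [Ne, mk_eq_zero_iff, pow_succ]
  intro h
  have h1 : π ∣ 1 := (dvd_cancel_left_mem_nonZeroDivisors (pow_mem hπ k)).1 (by rwa [mul_one])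
  exact Ideal.IsMaximal.ne_top ‹_› (Ideal.span_singleton_eq_top.2 (isUnit_of_dvd_one h1))

theorem annDensity_of_notMem_range_shift {r : PowQuotient π (k + 1)}
    (hr : r ∉ (shift π k).range) :
    annDensity r = (Nat.card (PowQuotient π (k + 1)) : ℝ)⁻¹ :=
  annDensity_of_isUnit (isUnit_iff_notMem_range_shift.2 hr)

variable [Finite (A ⧸ Ideal.span {π})]

instance : Finite (PowQuotient π k) := by
  have h := Ideal.finite_quotient_pow (Submodule.fg_span_singleton π) k
  rwa [Ideal.span_singleton_pow] at h

theorem exists_isPrimitive (hπ : π ∈ nonZeroDivisors A) (k : ℕ) :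
    ∃ ψ : AddChar (PowQuotient π (k + 1)) ℂ, ψ.IsPrimitive :=
  exists_isPrimitive_of_forall_dvd (mk_pow_ne_zero hπ) fun _ => dvd_mk_pow

theorem natCard_units_add (hπ : π ∈ nonZeroDivisors A) (k : ℕ) :
    Nat.card (PowQuotient π (k + 1))ˣ + Nat.card (PowQuotient π k) =
      Nat.card (PowQuotient π (k + 1)) := by
  have := Classical.decPred fun r : PowQuotient π (k + 1) => r ∈ (shift π k).range
  have hunits : Nat.card (PowQuotient π (k + 1))ˣ = Nat.card {r // r ∉ (shift π k).range} :=
    Nat.card_congr <| (Equiv.ofInjective _ Units.val_injective).trans <|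
      Equiv.subtypeEquivRight fun _ => isUnit_iff_notMem_range_shift
  have hrange : Nat.card (PowQuotient π k) = Nat.card {r // r ∈ (shift π k).range} :=
    (Nat.card_range_of_injective (shift_injective hπ)).symm
  rw [hunits, hrange, add_comm, ← Nat.card_sum]
  exact Nat.card_congr (Equiv.sumCompl _)

theorem natCard_units_div_natCard (hπ : π ∈ nonZeroDivisors A) (k : ℕ) :
    (Nat.card (PowQuotient π (k + 1))ˣ : ℝ) / Nat.card (PowQuotient π (k + 1)) =
      1 - (Nat.card (A ⧸ Ideal.span {π}) : ℝ)⁻¹ := by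
  have hq : (Nat.card (A ⧸ Ideal.span {π}) : ℝ) ≠ 0 := by exact_mod_cast Nat.card_pos.ne'
  have hu : (Nat.card (PowQuotient π (k + 1))ˣ : ℝ) + Nat.card (PowQuotient π k) =
      Nat.card (PowQuotient π (k + 1)) := by exact_mod_cast natCard_units_add hπ k
  rw [eq_sub_of_add_eq hu, natCard_eq_pow hπ, natCard_eq_pow hπ]
  push_cast
  field_simp
  ring

theorem sum_annDensity_le (hπ : π ∈ nonZeroDivisors A) (k : ℕ) :
    ∑ r : PowQuotient π k, annDensity r ≤ k + 1 := by
  induction k with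
  | zero =>
    calc ∑ r : PowQuotient π 0, annDensity r ≤ ∑ r : PowQuotient π 0, 1 :=
          Finset.sum_le_sum fun r _ => annDensity_le_one r
      _ = (0 : ℕ) + 1 := by
          rw [Finset.sum_const, Finset.card_univ, ← Nat.card_eq_fintype_card, natCard_eq_pow hπ]
          simp
  | succ k ih =>
    have := Classical.decEq (PowQuotient π (k + 1))
    let I : Finset (PowQuotient π (k + 1)) := Finset.univ.image (shift π k)
    have hI : ∑ r ∈ I, annDensity r = ∑ r : PowQuotient π k, annDensity r := by
      rw [Finset.sum_image (shift_injective hπ).injOn]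
      simp only [annDensity_shift hπ]
    have hIc : ∑ r ∈ Iᶜ, annDensity r ≤ 1 := by
      have hcard : (0 : ℝ) < Nat.card (PowQuotient π (k + 1)) := by exact_mod_cast Nat.card_pos
      calc ∑ r ∈ Iᶜ, annDensity r
          ≤ ∑ r ∈ Iᶜ, (Nat.card (PowQuotient π (k + 1)) : ℝ)⁻¹ :=
            Finset.sum_le_sum fun r hr =>
              (annDensity_of_notMem_range_shift (by simpa [I] using hr)).le
        _ ≤ ∑ r : PowQuotient π (k + 1), (Nat.card (PowQuotient π (k + 1)) : ℝ)⁻¹ :=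
            Finset.sum_le_univ_sum_of_nonneg fun _ => by positivity
        _ = 1 := by
            rw [Finset.sum_const, Finset.card_univ, ← Nat.card_eq_fintype_card, nsmul_eq_mul,
              mul_inv_cancel₀ hcard.ne']
    rw [← Finset.sum_add_sum_compl I, hI]
    push_cast
    linarith

end PowQuotient

theorem summable_succ_pow_mul_geometric (n : ℕ) {r : ℝ} (hr0 : 0 < r) (hr : r < 1) :
    Summable fun k : ℕ => (k + 1 : ℝ) ^ n * r ^ k := by
  have h : Summable fun k : ℕ => (k : ℝ) ^ n * r ^ k :=
    summable_pow_mul_geometric_of_norm_lt_one n (by rwa [Real.norm_of_nonneg hr0.le])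
  refine ((summable_nat_add_iff 1).2 h).mul_right r⁻¹ |>.congr fun k => ?_
  rw [pow_succ, Nat.cast_add_one]
  field_simp

namespace FinQuiver

open Filter Topology

section Limits

variable {G : FinQuiver} {A : Type} [CommRing A] {π : A} [(Ideal.span {π}).IsMaximal]
  [Finite (A ⧸ Ideal.span {π})]

theorem Connected.abs_potentialSum_succ_sub_le (hG : G.Connected) (ρ : G.V)
    (hπ : π ∈ nonZeroDivisors A) (k : ℕ) :
    |G.potentialSum ρ (annDensity (R := PowQuotient π (k + 1))) -
        G.potentialSum ρ (annDensity (R := PowQuotient π k))| ≤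
      (Nat.card (PowQuotient π (k + 1)) : ℝ)⁻¹ *
        G.deletionSum ρ (annDensity (R := PowQuotient π (k + 1))) := by
  have hshift : annDensity (R := PowQuotient π k) =
      annDensity ∘ (PowQuotient.shift π k).toAddMonoidHom :=
    funext fun r => (PowQuotient.annDensity_shift hπ r).symm
  rw [hshift]
  exact hG.abs_potentialSum_sub_comp_le ρ (PowQuotient.shift_injective hπ) annDensity_nonneg
    (by positivity) fun r hr => (PowQuotient.annDensity_of_notMem_range_shift hr).le

theorem TwoConnected.deletionSum_annDensity_le (hG : G.TwoConnected) (ρ : G.V)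
    (hπ : π ∈ nonZeroDivisors A) (k : ℕ) :
    G.deletionSum ρ (annDensity (R := PowQuotient π k)) ≤
      Fintype.card G.E * (k + 1 : ℝ) ^ (Fintype.card G.V - 1) := by
  refine (hG.deletionSum_le ρ annDensity_nonneg annDensity_le_one).trans ?_
  gcongr
  · exact Finset.sum_nonneg fun r _ => annDensity_nonneg r
  · exact PowQuotient.sum_annDensity_le hπ k

theorem TwoConnected.summable_deletionSum_annDensity (hG : G.TwoConnected) (ρ : G.V)
    (hπ : π ∈ nonZeroDivisors A) :
    Summable fun k : ℕ => (Nat.card (PowQuotient π k) : ℝ)⁻¹ *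
      G.deletionSum ρ (annDensity (R := PowQuotient π k)) := by
  have hq : (1 : ℝ) < Nat.card (A ⧸ Ideal.span {π}) := by
    have := Ideal.Quotient.nontrivial_iff.2 (Ideal.IsMaximal.ne_top (I := Ideal.span {π}) ‹_›)
    exact_mod_cast Finite.one_lt_card
  refine .of_nonneg_of_le (fun k => mul_nonneg (by positivity) ?_) (fun k => ?_)
    ((summable_succ_pow_mul_geometric (Fintype.card G.V - 1) (inv_pos.2 (by positivity))
      (inv_lt_one_of_one_lt₀ hq)).mul_left (Fintype.card G.E : ℝ))
  · exact Finset.sum_nonneg fun e _ =>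
      potentialSum_nonneg (G := G.deleteEdge e) ρ annDensity_nonneg
  · rw [PowQuotient.natCard_eq_pow hπ, Nat.cast_pow, ← inv_pow, ← mul_assoc, mul_comm]
    exact mul_le_mul_of_nonneg_right (hG.deletionSum_annDensity_le ρ hπ k) (by positivity)

theorem TwoConnected.exists_tendsto_potentialSum (hG : G.TwoConnected) (ρ : G.V)
    (hπ : π ∈ nonZeroDivisors A) :
    ∃ L, Tendsto (fun k => G.potentialSum ρ (annDensity (R := PowQuotient π k))) atTop (𝓝 L) := by
  refine cauchySeq_tendsto_of_complete <| cauchySeq_of_dist_le_of_summable _ (fun k => ?_)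
    ((summable_nat_add_iff 1).2 (hG.summable_deletionSum_annDensity ρ hπ))
  rw [dist_comm]
  exact hG.1.abs_potentialSum_succ_sub_le ρ hπ k

theorem TwoConnected.tendsto_connectedDensity (hG : G.TwoConnected) (ρ : G.V)
    (hπ : π ∈ nonZeroDivisors A) {L : ℝ}
    (hL : Tendsto (fun k => G.potentialSum ρ (annDensity (R := PowQuotient π k))) atTop (𝓝 L)) :
    Tendsto (fun k => G.connectedDensity (PowQuotient π k) ρ) atTop (𝓝 L) := by
  have hdiff : Tendsto (fun k => G.connectedDensity (PowQuotient π k) ρ -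
      G.potentialSum ρ (annDensity (R := PowQuotient π k))) atTop (𝓝 0) :=
    squeeze_zero_norm (fun k => hG.1.abs_connectedDensity_sub_le ρ)
      (hG.summable_deletionSum_annDensity ρ hπ).tendsto_atTop_zero
  simpa using hdiff.add hL

theorem tendsto_zpow_mul_bCount (ρ : G.V) (hπ : π ∈ nonZeroDivisors A) {L : ℝ}
    (hL : Tendsto (fun k => G.potentialSum ρ (annDensity (R := PowQuotient π k))) atTop (𝓝 L)) :
    Tendsto (fun k : ℕ => (Nat.card (A ⧸ Ideal.span {π}) : ℝ) ^
        (-(k : ℤ) * (2 * (Fintype.card G.E : ℤ) - (Fintype.card G.V : ℤ) + 1)) *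
      (BCount G (PowQuotient π k) : ℝ)) atTop (𝓝 L) := by
  rw [← tendsto_add_atTop_iff_nat 1] at hL ⊢
  refine hL.congr fun k => ?_
  obtain ⟨ψ, hψ⟩ := PowQuotient.exists_isPrimitive hπ k
  rw [← zpow_mul_bCount ρ hψ, PowQuotient.natCard_eq_pow hπ, Nat.cast_pow, ← zpow_natCast,
    ← zpow_mul, neg_mul, mul_neg]

theorem TwoConnected.tendsto_zpow_mul_kacCount (hG : G.TwoConnected) (ρ : G.V)
    (hπ : π ∈ nonZeroDivisors A) {L : ℝ}
    (hL : Tendsto (fun k => G.potentialSum ρ (annDensity (R := PowQuotient π k))) atTop (𝓝 L)) :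
    Tendsto (fun k : ℕ => (Nat.card (A ⧸ Ideal.span {π}) : ℝ) ^ (-(k : ℤ) * G.betti) *
      (KacCount G (PowQuotient π k) : ℝ)) atTop
      (𝓝 (L / (1 - (Nat.card (A ⧸ Ideal.span {π}) : ℝ)⁻¹) ^ (Fintype.card G.V - 1))) := by
  have hD := (hG.tendsto_connectedDensity ρ hπ hL).div_const
    ((1 - (Nat.card (A ⧸ Ideal.span {π}) : ℝ)⁻¹) ^ (Fintype.card G.V - 1))
  rw [← tendsto_add_atTop_iff_nat 1] at hD ⊢
  refine hD.congr fun k => ?_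
  rw [← PowQuotient.natCard_units_div_natCard hπ k, ← hG.1.zpow_mul_kacCount ρ,
    PowQuotient.natCard_eq_pow hπ, Nat.cast_pow, ← zpow_natCast, ← zpow_mul, neg_mul, mul_neg]

end Limits

end FinQuiver

theorem wyss_limits_relation_general (G : FinQuiver) (h2 : G.TwoConnected) {A : Type} [CommRing A]
    {π : A} (hπ : π ∈ nonZeroDivisors A) [(Ideal.span {π}).IsMaximal]
    [Finite (A ⧸ Ideal.span {π})] :
    ∃ AQ BQ : ℝ,
      Filter.Tendsto (fun α : ℕ => (Nat.card (A ⧸ Ideal.span {π}) : ℝ) ^ (-(α : ℤ) * G.betti) *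
        (KacCount G (PowQuotient π α) : ℝ)) Filter.atTop (nhds AQ) ∧
      Filter.Tendsto (fun α : ℕ => (Nat.card (A ⧸ Ideal.span {π}) : ℝ) ^
          (-(α : ℤ) * (2 * (Fintype.card G.E : ℤ) - (Fintype.card G.V : ℤ) + 1)) *
        (BCount G (PowQuotient π α) : ℝ)) Filter.atTop (nhds BQ) ∧
      BQ / (1 - (Nat.card (A ⧸ Ideal.span {π}) : ℝ)⁻¹) ^ Fintype.card G.V =
        AQ / (1 - (Nat.card (A ⧸ Ideal.span {π}) : ℝ)⁻¹) := by
  obtain ⟨ρ⟩ := h2.1.nonempty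
  obtain ⟨L, hL⟩ := h2.exists_tendsto_potentialSum ρ hπ
  refine ⟨_, L, h2.tendsto_zpow_mul_kacCount ρ hπ hL, FinQuiver.tendsto_zpow_mul_bCount ρ hπ hL, ?_⟩
  rw [div_div, ← pow_succ, Nat.sub_add_cancel (Fintype.card_pos_iff.2 ⟨ρ⟩)]

instance (F : Type*) [Field F] : (Ideal.span {(Polynomial.X : Polynomial F)}).IsMaximal :=
  PrincipalIdealRing.isMaximal_of_irreducible Polynomial.irreducible_X

/-- Evaluation at `0`, as an isomorphism `F[t] / (t) ≃ F`. -/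
noncomputable def quotientSpanXEquiv (F : Type*) [CommRing F] :
    (Polynomial F ⧸ Ideal.span {(Polynomial.X : Polynomial F)}) ≃+* F :=
  (Ideal.quotEquivOfEq (by rw [Polynomial.C_0, sub_zero])).trans
    (Polynomial.quotientSpanXSubCAlgEquiv 0).toRingEquiv

instance (F : Type*) [CommRing F] [Finite F] :
    Finite (Polynomial F ⧸ Ideal.span {(Polynomial.X : Polynomial F)}) :=
  .of_equiv F (quotientSpanXEquiv F).symm.toEquiv

/-- Let `Q` be a finite quiver whose underlying multigraph is
2-connected, and let `q` be a prime power (the cardinality of a finite field `F`;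
`R = 𝔽_q[t]/(t^α)`).  Then the real sequences `α ↦ q^{−α·b(Q)} · A_{(Q,α),1̲}(q)` and
`α ↦ q^{−α(2·#Q₁ − #Q₀ + 1)} · B_{(Q,α)}(q)` both converge as `α → ∞`, and their limits
`A_Q` and `B_{μ_Q}` satisfy `B_{μ_Q}/(1 − q⁻¹)^{#Q₀} = A_Q/(1 − q⁻¹)`. -/
theorem wyss_limits_relation (G : FinQuiver) (h2 : G.TwoConnected)
    (F : Type) [Field F] [Fintype F] :
    ∃ AQ BQ : ℝ,
      Filter.Tendsto (fun α : ℕ =>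
          (Fintype.card F : ℝ) ^ (-(α : ℤ) * G.betti) * (KacCount G (TruncRing F α) : ℝ))
        Filter.atTop (nhds AQ) ∧
      Filter.Tendsto (fun α : ℕ =>
          (Fintype.card F : ℝ) ^
              (-(α : ℤ) * (2 * (Fintype.card G.E : ℤ) - (Fintype.card G.V : ℤ) + 1)) *
            (BCount G (TruncRing F α) : ℝ))
        Filter.atTop (nhds BQ) ∧
      BQ / (1 - (Fintype.card F : ℝ)⁻¹) ^ (Fintype.card G.V)
        = AQ / (1 - (Fintype.card F : ℝ)⁻¹) := by
  have h := wyss_limits_relation_general G h2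
    (mem_nonZeroDivisors_of_ne_zero (Polynomial.X_ne_zero (R := F)))
  rwa [Nat.card_congr (quotientSpanXEquiv F).toEquiv, Nat.card_eq_fintype_card] at h
end

section
/- Let Q be a finite quiver and α ≥ 1 an integer. There exists a polynomial P ∈ ℤ[X] with non-negative coefficients such that for every prime power q, A_{(Q,α),1̲}(q) = P(q). (Positivity of toric Kac polynomials of quivers with multiplicities.) -/
/-!
Deletion–contraction. Weight the arrows by `m : Q₁ → ℕ`, and count the classes of representations
with connected support such that `t ^ m a` divides `x a` for all `a`. If `e` is a loop, then `x e`
is gauge invariant and irrelevant to connectedness, so deleting `e` splits off the number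
`q ^ (α - m e)` of multiples of `t ^ m e`. If `e` is not a loop and its weight is minimal, then
either `t ^ (m e + 1)` divides `x e`, which raises the weight of `e`, or `x e` is a unit multiple of
`t ^ m e` and can be normalized to `t ^ m e` by the gauge action. The remaining gauge freedom acts
on the other entries, all divisible by `t ^ m e`, as the gauge group of the contraction of `e`.
When all weights are at least `α`, only `x = 0` is left. So the count is built from `0`, `1` and `q`
by sums and products.
-/

theorem ncard_image_eq_of_eq_iff_eq {X Y Z : Type*} {f : X → Y} {g : X → Z} {s : Set X}
    (h : ∀ x ∈ s, ∀ y ∈ s, f x = f y ↔ g x = g y) : (f '' s).ncard = (g '' s).ncard := by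
  obtain ⟨r, hrs, hr⟩ := (Set.surjOn_image f s).exists_bijOn_subset
  have hg : Set.BijOn g r (g '' s) := by
    refine ⟨fun x hx => Set.mem_image_of_mem g (hrs hx),
      fun x hx y hy hxy => hr.injOn hx hy ((h x (hrs hx) y (hrs hy)).2 hxy), ?_⟩
    rintro _ ⟨x, hx, rfl⟩
    obtain ⟨y, hy, hxy⟩ := hr.surjOn (Set.mem_image_of_mem f hx)
    exact ⟨y, hy, (h y (hrs hy) x hx).1 hxy⟩
  rw [← hr.image_eq, ← hg.image_eq, hr.injOn.ncard_image, hg.injOn.ncard_image]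

section Uniformizer

/-- `t` generates the maximal ideal of the local ring `R` and its nilpotency index is `α`. Such
an `R` is a chain ring of length `α`: its ideals are the `(t ^ m)` for `m ≤ α`. -/
structure IsUniformizer {R : Type*} [CommRing R] [IsLocalRing R] (t : R) (α : ℕ) : Prop where
  maximalIdeal_eq : IsLocalRing.maximalIdeal R = Ideal.span {t}
  pow_eq_zero_iff (m : ℕ) : t ^ m = 0 ↔ α ≤ m

namespace IsUniformizer

variable {R : Type*} [CommRing R] [IsLocalRing R] {t : R} {α : ℕ}

theorem not_isUnit_iff_dvd (ht : IsUniformizer t α) {x : R} : ¬IsUnit x ↔ t ∣ x := by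
  rw [← mem_nonunits_iff, ← IsLocalRing.mem_maximalIdeal, ht.maximalIdeal_eq,
    Ideal.mem_span_singleton]

theorem exists_eq_pow_mul_unit (ht : IsUniformizer t α) {m : ℕ} {x : R} (hx : t ^ m ∣ x)
    (hx' : ¬t ^ (m + 1) ∣ x) : ∃ w : Rˣ, x = t ^ m * w := by
  obtain ⟨y, rfl⟩ := hx
  have hy : IsUnit y := by
    by_contra hy
    exact hx' (pow_succ t m ▸ mul_dvd_mul_left _ (ht.not_isUnit_iff_dvd.1 hy))
  exact ⟨hy.unit, rfl⟩

theorem dvd_of_pow_mul_eq_zero (ht : IsUniformizer t α) {m : ℕ} (hm : m < α) {y : R}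
    (hy : t ^ m * y = 0) : t ∣ y :=
  ht.not_isUnit_iff_dvd.1 fun hu =>
    hm.not_ge ((ht.pow_eq_zero_iff m).1 (hu.mul_left_eq_zero.1 hy))

theorem not_pow_succ_dvd_pow (ht : IsUniformizer t α) {m : ℕ} (hm : m < α) :
    ¬t ^ (m + 1) ∣ t ^ m := by
  rintro ⟨z, hz⟩
  have h : t ∣ 1 - t * z := ht.dvd_of_pow_mul_eq_zero hm (by linear_combination hz)
  exact ht.not_isUnit_iff_dvd.2 ((dvd_sub_left (dvd_mul_right t z)).1 h) isUnit_one

/-- Multiplication by `t ^ m` maps `R` onto `(t ^ m)` and `(t)` onto `(t ^ (m + 1))`, and its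
kernel lies in `(t)`. -/
theorem index_span_pow_succ (ht : IsUniformizer t α) {m : ℕ} (hm : m < α) :
    (Ideal.span {t ^ (m + 1)}).toAddSubgroup.index =
      Nat.card (IsLocalRing.ResidueField R) * (Ideal.span {t ^ m}).toAddSubgroup.index := by
  let f : R →+ R := AddMonoidHom.mulLeft (t ^ m)
  have hrange : f.range = (Ideal.span {t ^ m}).toAddSubgroup := by
    ext y
    simp [f, Ideal.mem_span_singleton, dvd_def, eq_comm]
  have hmap : (IsLocalRing.maximalIdeal R).toAddSubgroup.map f =
      (Ideal.span {t ^ (m + 1)}).toAddSubgroup := by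
    ext y
    simp only [AddSubgroup.mem_map, Submodule.mem_toAddSubgroup, ht.maximalIdeal_eq,
      Ideal.mem_span_singleton]
    constructor
    · rintro ⟨_, hx, rfl⟩
      exact pow_succ t m ▸ mul_dvd_mul_left _ hx
    · rintro ⟨z, rfl⟩
      exact ⟨t * z, dvd_mul_right t z, by simp only [f, AddMonoidHom.coe_mulLeft]; ring⟩
  have hker : f.ker ≤ (IsLocalRing.maximalIdeal R).toAddSubgroup := fun y hy => by
    rw [Submodule.mem_toAddSubgroup, ht.maximalIdeal_eq, Ideal.mem_span_singleton]
    exact ht.dvd_of_pow_mul_eq_zero hm hy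
  rw [← hmap, AddSubgroup.index_map, sup_eq_left.2 hker, hrange]
  rfl

theorem index_span_pow (ht : IsUniformizer t α) {m : ℕ} (hm : m ≤ α) :
    (Ideal.span {t ^ m}).toAddSubgroup.index = Nat.card (IsLocalRing.ResidueField R) ^ m := by
  induction m with
  | zero => simp [Ideal.span_singleton_one]
  | succ m ih => rw [ht.index_span_pow_succ hm, ih (Nat.le_of_succ_le hm), pow_succ']

theorem ncard_setOf_pow_dvd [Finite R] (ht : IsUniformizer t α) (m : ℕ) :
    {y : R | t ^ m ∣ y}.ncard = Nat.card (IsLocalRing.ResidueField R) ^ (α - m) := by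
  have hzero : t ^ α = 0 := (ht.pow_eq_zero_iff α).2 le_rfl
  obtain hm | hm := le_total α m
  · simp [(ht.pow_eq_zero_iff m).2 hm, Nat.sub_eq_zero_of_le hm]
  have hcard : Nat.card R = Nat.card (IsLocalRing.ResidueField R) ^ α := by
    rw [← ht.index_span_pow le_rfl, hzero]
    simp
  have hmul := (Ideal.span {t ^ m}).toAddSubgroup.card_mul_index
  rw [ht.index_span_pow hm, hcard, ← pow_sub_mul_pow _ hm] at hmul
  have : Finite (IsLocalRing.ResidueField R) :=
    Finite.of_surjective _ IsLocalRing.residue_surjective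
  have hset : {y : R | t ^ m ∣ y} = (Ideal.span {t ^ m}).toAddSubgroup :=
    Set.ext fun _ => Ideal.mem_span_singleton.symm
  rw [hset, ← Nat.card_coe_set_eq]
  exact Nat.eq_of_mul_eq_mul_right (pow_pos Nat.card_pos m) hmul

end IsUniformizer

theorem exists_isUniformizer (R : Type*) [CommRing R] [IsArtinianRing R] [IsLocalRing R]
    [IsPrincipalIdealRing R] :
    ∃ t : R, IsUniformizer t (nilpotencyClass (IsLocalRing.maximalIdeal R)) := by
  obtain ⟨t, ht⟩ := IsPrincipalIdealRing.principal (IsLocalRing.maximalIdeal R)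
  have hnil : IsNilpotent (IsLocalRing.maximalIdeal R) :=
    (isArtinianRing_iff_isNilpotent_maximalIdeal R).1 inferInstance
  refine ⟨t, ht, fun m => ?_⟩
  rw [← Ideal.span_singleton_eq_bot, ← Ideal.span_singleton_pow, ← Ideal.submodule_span_eq, ← ht]
  exact ⟨fun h => Nat.sInf_le h, fun h => pow_eq_zero_of_le h (pow_nilpotencyClass hnil)⟩

theorem IsUniformizer.nilpotencyClass_maximalIdeal {R : Type*} [CommRing R] [IsLocalRing R] {t : R}
    {α : ℕ} (ht : IsUniformizer t α) : nilpotencyClass (IsLocalRing.maximalIdeal R) = α := by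
  have h (m : ℕ) : IsLocalRing.maximalIdeal R ^ m = 0 ↔ α ≤ m := by
    rw [ht.maximalIdeal_eq, Ideal.span_singleton_pow, Ideal.zero_eq_bot,
      Ideal.span_singleton_eq_bot, ht.pow_eq_zero_iff]
  simp only [nilpotencyClass, h]
  exact csInf_Ici

end Uniformizer

namespace FinQuiver

section Connectivity

variable {G : FinQuiver}

theorem restrictE_connected_iff {S : Set G.E} :
    (G.restrictE S).Connected ↔ Nonempty G.V ∧
      ∀ p : G.V → Prop, (∀ a ∈ S, p (G.s a) ↔ p (G.t a)) → ∀ i j, p i → p j := by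
  have hadj {i j : G.V} : (G.restrictE S).adjGraph.Adj i j ↔
      i ≠ j ∧ ((∃ a ∈ S, G.s a = i ∧ G.t a = j) ∨ ∃ a ∈ S, G.s a = j ∧ G.t a = i) := by
    refine (SimpleGraph.fromRel_adj _ _ _).trans (and_congr_right fun _ => or_congr ?_ ?_) <;>
      exact ⟨fun ⟨a, h⟩ => ⟨a.1, a.2, h⟩, fun ⟨a, ha, h⟩ => ⟨⟨a, ha⟩, h⟩⟩
  refine (SimpleGraph.connected_iff _).trans (and_comm.trans (and_congr_right fun _ => ?_))
  constructor
  · intro hconn p hp i j hi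
    obtain ⟨w⟩ := hconn i j
    induction w with
    | nil => exact hi
    | cons h _ ih =>
      refine ih ?_
      obtain ⟨-, ⟨a, ha, rfl, rfl⟩ | ⟨a, ha, rfl, rfl⟩⟩ := hadj.1 h
      · exact (hp a ha).1 hi
      · exact (hp a ha).2 hi
  · intro h i j
    refine h ((G.restrictE S).adjGraph.Reachable i) (fun a ha => ?_) i j .rfl
    obtain hloop | hne := eq_or_ne (G.s a) (G.t a)
    · rw [hloop]
    · have hst : (G.restrictE S).adjGraph.Adj (G.s a) (G.t a) :=
        hadj.2 ⟨hne, .inl ⟨a, ha, rfl, rfl⟩⟩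
      exact ⟨fun hi => hi.trans hst.reachable, fun hi => hi.trans hst.symm.reachable⟩

theorem restrictE_connected_iff_deleteEdge {e : G.E} (he : G.s e = G.t e) {S : Set G.E} :
    (G.restrictE S).Connected ↔
      ((G.deleteEdge e).restrictE {a | a.1 ∈ S}).Connected := by
  rw [restrictE_connected_iff, restrictE_connected_iff]
  refine and_congr_right fun _ => forall_congr' fun p => imp_congr_left ?_
  refine ⟨fun h a ha => h a.1 ha, fun h a ha => ?_⟩
  obtain rfl | hae := eq_or_ne a e
  · rw [he]
  · exact h ⟨a, hae⟩ ha

/-- The map from the vertices of `G` to those of the contraction of `e`, which sends the target of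
`e` to its source. -/
def merge {e : G.E} (he : G.s e ≠ G.t e) (i : G.V) : {i : G.V // i ≠ G.t e} :=
  if h : i = G.t e then ⟨G.s e, he⟩ else ⟨i, h⟩

theorem merge_coe {e : G.E} (he : G.s e ≠ G.t e) (i : {i : G.V // i ≠ G.t e}) :
    merge he i.1 = i :=
  dif_neg i.2

theorem apply_merge {X : Type*} {e : G.E} (he : G.s e ≠ G.t e) (f : G.V → X)
    (hf : f (G.s e) = f (G.t e)) (i : G.V) : f (merge he i).1 = f i := by
  unfold merge
  split_ifs with h
  · rw [h, hf]
  · rfl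

theorem merge_source_eq_merge_target {e : G.E} (he : G.s e ≠ G.t e) :
    merge he (G.s e) = merge he (G.t e) := by
  simp [merge, he]

/-- The contraction of an edge `e` that is not a loop: the edge `e` is removed, and its target is
identified with its source. -/
noncomputable abbrev contract {e : G.E} (he : G.s e ≠ G.t e) : FinQuiver :=
  letI : DecidableEq G.E := Classical.decEq _
  { V := {i : G.V // i ≠ G.t e}
    E := {a : G.E // a ≠ e}
    s := fun a => merge he (G.s a.1)
    t := fun a => merge he (G.t a.1) }

theorem restrictE_connected_iff_contract {e : G.E} (he : G.s e ≠ G.t e) {S : Set G.E}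
    (heS : e ∈ S) :
    (G.restrictE S).Connected ↔ ((G.contract he).restrictE {a | a.1 ∈ S}).Connected := by
  rw [restrictE_connected_iff, restrictE_connected_iff]
  refine and_congr ⟨fun _ => ⟨⟨G.s e, he⟩⟩, fun ⟨i⟩ => ⟨i.1⟩⟩ ⟨fun h p hp i j hi => ?_,
    fun h p hp i j hi => ?_⟩
  · refine merge_coe he j ▸ h (fun i => p (merge he i)) (fun a ha => ?_) i.1 j.1
      ((merge_coe he i).symm ▸ hi)
    obtain rfl | hae := eq_or_ne a e
    · rw [merge_source_eq_merge_target]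
    · exact hp ⟨a, hae⟩ ha
  · have hpm := apply_merge he p (propext (hp e heS))
    rw [← hpm j]
    refine h (fun i => p i.1) (fun a ha => ?_) (merge he i) (merge he j) ((hpm i).symm ▸ hi)
    exact (hpm _).to_iff.trans ((hp a.1 ha).trans (hpm _).symm.to_iff)

end Connectivity

section ExtendBy

variable {G : FinQuiver} {R : Type*} {e : G.E}

open Classical in
/-- Extension by the entry `c` at `e` of a representation of the deletion or the contraction
of `e`. -/
noncomputable def extendBy (c : R) (x : {a : G.E // a ≠ e} → R) : G.E → R :=
  (Equiv.funSplitAt e R).symm (c, x)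

variable {c : R} {x : {a : G.E // a ≠ e} → R}

@[simp]
theorem extendBy_self : extendBy c x e = c := by simp [extendBy]

@[simp]
theorem extendBy_coe (a : {a : G.E // a ≠ e}) : extendBy c x a.1 = x a := by
  simp [extendBy, a.2]

theorem extendBy_restrict (x : G.E → R) :
    extendBy (x e) (fun a : {a : G.E // a ≠ e} => x a.1) = x := by
  funext a
  obtain rfl | hae := eq_or_ne a e
  · exact extendBy_self
  · exact extendBy_coe ⟨a, hae⟩

theorem forall_edge_iff (e : G.E) {p : G.E → Prop} :
    (∀ a, p a) ↔ p e ∧ ∀ a : {a : G.E // a ≠ e}, p a.1 := by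
  refine ⟨fun h => ⟨h e, fun a => h a.1⟩, fun h a => ?_⟩
  obtain rfl | hae := eq_or_ne a e
  · exact h.1
  · exact h.2 ⟨a, hae⟩

end ExtendBy

section Orbits

variable {G : FinQuiver} {R : Type} [CommRing R]

theorem gaugeRel_iff {x y : G.E → R} :
    GaugeRel G R x y ↔ ∃ u : G.V → Rˣ, ∀ a, y a * u (G.s a) = u (G.t a) * x a := by
  simp only [GaugeRel, Units.eq_mul_inv_iff_mul_eq]

variable (G R) in
/-- Isomorphism of rank-`1̲` representations of `G` over `R`. -/
def gaugeSetoid : Setoid (G.E → R) where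
  r := GaugeRel G R
  iseqv :=
    { refl := fun x => ⟨1, fun a => by simp⟩
      symm := by
        rintro x y ⟨u, hu⟩
        exact ⟨u⁻¹, fun a => by simp [hu a, mul_assoc, mul_left_comm]⟩
      trans := by
        rintro x y z ⟨u, hu⟩ ⟨w, hw⟩
        refine ⟨w * u, fun a => ?_⟩
        rw [hw a, hu a]
        simp only [Pi.mul_apply, Units.val_mul, mul_inv]
        ring }

/-- The isomorphism class of a rank-`1̲` representation. -/
def gaugeClass (x : G.E → R) : Quotient (gaugeSetoid G R) := Quotient.mk _ x

theorem gaugeClass_eq_iff {x y : G.E → R} : gaugeClass x = gaugeClass y ↔ GaugeRel G R x y :=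
  Quotient.eq

variable (G) in
/-- The representations of `G` with connected support whose entry at the arrow `a` is divisible
by `t ^ m a`. The weight `m` is what varies in the deletion–contraction recursion. -/
def connectedReps (t : R) (m : G.E → ℕ) : Set (G.E → R) :=
  {x | (∀ a, t ^ m a ∣ x a) ∧ (G.restrictE {a | x a ≠ 0}).Connected}

theorem mem_connectedReps {t : R} {m : G.E → ℕ} {x : G.E → R} :
    x ∈ G.connectedReps t m ↔ (∀ a, t ^ m a ∣ x a) ∧ (G.restrictE {a | x a ≠ 0}).Connected :=
  Iff.rfl

theorem dvd_iff_of_gaugeRel {x y : G.E → R} (h : GaugeRel G R x y) (r : R) (a : G.E) :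
    r ∣ x a ↔ r ∣ y a := by
  obtain ⟨u, hu⟩ := h
  rw [hu a, Units.dvd_mul_right, Units.dvd_mul_left]

theorem mem_connectedReps_iff_of_gaugeRel {x y : G.E → R} (h : GaugeRel G R x y) {t : R}
    {m : G.E → ℕ} : x ∈ G.connectedReps t m ↔ y ∈ G.connectedReps t m := by
  have hsupp : {a | x a ≠ 0} = {a | y a ≠ 0} :=
    Set.ext fun a => not_congr (by rw [← zero_dvd_iff, dvd_iff_of_gaugeRel h, zero_dvd_iff])
  simp only [mem_connectedReps, dvd_iff_of_gaugeRel h, hsupp]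

theorem mem_connectedReps_iff_of_pow_eq_zero {t : R} {m : G.E → ℕ} (hm : ∀ a, t ^ m a = 0)
    {x : G.E → R} : x ∈ G.connectedReps t m ↔ x = 0 ∧ (G.restrictE ∅).Connected := by
  simp only [mem_connectedReps, hm, zero_dvd_iff, funext_iff, Pi.zero_apply]
  exact and_congr_right fun hx => by simp [hx]

variable (G) in
/-- The number of isomorphism classes in `connectedReps t m`, a weighted version of `KacCount`. -/
noncomputable def classCount (t : R) (m : G.E → ℕ) : ℕ := (gaugeClass '' G.connectedReps t m).ncard

theorem kacCount_eq_classCount (t : R) : KacCount G R = G.classCount t 0 := by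
  rw [classCount, ← Nat.card_coe_set_eq]
  let f : Quot (fun x y : {x : G.E → R // (G.restrictE {a | x a ≠ 0}).Connected} =>
      GaugeRel G R x.1 y.1) → ↥(gaugeClass '' G.connectedReps t 0) :=
    Quot.lift (fun x => ⟨gaugeClass x.1, x.1, ⟨by simp, x.2⟩, rfl⟩)
      fun x y h => Subtype.ext (gaugeClass_eq_iff.2 h)
  refine Nat.card_congr (Equiv.ofBijective f ⟨?_, ?_⟩)
  · rintro ⟨x⟩ ⟨y⟩ h
    exact Quot.sound (gaugeClass_eq_iff.1 (congrArg Subtype.val h))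
  · rintro ⟨_, x, hx, rfl⟩
    exact ⟨Quot.mk _ ⟨x, hx.2⟩, rfl⟩

section DeleteLoop

variable {e : G.E}

theorem extendBy_mem_connectedReps_iff_of_loop (he : G.s e = G.t e) {t c : R} {m : G.E → ℕ}
    {x : {a : G.E // a ≠ e} → R} :
    extendBy c x ∈ G.connectedReps t m ↔
      t ^ m e ∣ c ∧
        x ∈ (G.deleteEdge e).connectedReps t (fun a : {a : G.E // a ≠ e} => m a.1) := by
  have hsupp : {a : {a : G.E // a ≠ e} | extendBy c x a.1 ≠ 0} = {a | x a ≠ 0} := by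
    simp only [extendBy_coe]
  have hconn := restrictE_connected_iff_deleteEdge he (S := {a | extendBy c x a ≠ 0})
  refine (and_congr (forall_edge_iff e) (hsupp ▸ hconn)).trans ?_
  simp only [extendBy_self, extendBy_coe]
  exact and_assoc

theorem gaugeRel_extendBy_iff_of_loop (he : G.s e = G.t e) {c d : R}
    {x y : {a : G.E // a ≠ e} → R} :
    GaugeRel G R (extendBy c x) (extendBy d y) ↔ c = d ∧ GaugeRel (G.deleteEdge e) R x y := by
  simp only [gaugeRel_iff, forall_edge_iff e, extendBy_self, extendBy_coe, ← he,
    mul_comm d, Units.mul_right_inj, exists_and_left]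
  exact and_congr eq_comm (gaugeRel_iff (G := G.deleteEdge e)).symm

theorem classCount_of_loop (he : G.s e = G.t e) (t : R) (m : G.E → ℕ) :
    G.classCount t m = {c : R | t ^ m e ∣ c}.ncard *
      (G.deleteEdge e).classCount t (fun a : {a : G.E // a ≠ e} => m a.1) := by
  let φ : (G.E → R) → R × Quotient (gaugeSetoid (G.deleteEdge e) R) := fun x =>
    (x e, gaugeClass fun a => x a.1)
  have hφ (x y : G.E → R) : gaugeClass x = gaugeClass y ↔ φ x = φ y := by
    have h := gaugeRel_extendBy_iff_of_loop (R := R) he (c := x e) (d := y e)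
      (x := fun a => x a.1) (y := fun a => y a.1)
    rw [extendBy_restrict, extendBy_restrict] at h
    rw [Prod.mk_inj, gaugeClass_eq_iff, gaugeClass_eq_iff]
    exact h
  rw [classCount, ncard_image_eq_of_eq_iff_eq fun x _ y _ => hφ x y]
  refine Eq.trans ?_ Set.ncard_prod
  congr 1
  ext ⟨c, o⟩
  constructor
  · rintro ⟨x, hx, h⟩
    rw [← extendBy_restrict (e := e) x, extendBy_mem_connectedReps_iff_of_loop he] at hx
    obtain ⟨rfl, rfl⟩ := Prod.mk_inj.1 h
    exact ⟨hx.1, _, hx.2, rfl⟩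
  · rintro ⟨hc, x, hx, rfl⟩
    refine ⟨extendBy c x, (extendBy_mem_connectedReps_iff_of_loop he).2 ⟨hc, hx⟩, ?_⟩
    exact Prod.ext extendBy_self (congrArg gaugeClass (funext fun a => extendBy_coe a))

end DeleteLoop

section Contract

variable {e : G.E} {m : G.E → ℕ} {t : R}

theorem extendBy_mem_connectedReps_iff_of_ne_zero (he : G.s e ≠ G.t e) (htm : t ^ m e ≠ 0)
    {x : {a : G.E // a ≠ e} → R} :
    extendBy (t ^ m e) x ∈ G.connectedReps t m ↔
      x ∈ (G.contract he).connectedReps t (fun a => m a.1) := by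
  rw [mem_connectedReps, mem_connectedReps, forall_edge_iff e,
    restrictE_connected_iff_contract he (by simpa using htm)]
  simp only [extendBy_self, extendBy_coe, Set.mem_ofPred_eq, dvd_refl, true_and]

/-- A gauge transformation fixing the entry `c` at `e` takes the same values at both ends of `e` up
to the annihilator of `c`, which also annihilates all the other entries. -/
theorem gaugeRel_extendBy_iff_of_dvd (he : G.s e ≠ G.t e) {c : R} {x y : {a : G.E // a ≠ e} → R}
    (hx : ∀ a, c ∣ x a) (hy : ∀ a, c ∣ y a) :
    GaugeRel G R (extendBy c x) (extendBy c y) ↔ GaugeRel (G.contract he) R x y := by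
  simp only [gaugeRel_iff, forall_edge_iff e, extendBy_self, extendBy_coe]
  constructor
  · rintro ⟨u, hue, hu⟩
    have hmerge {r : R} (hr : c ∣ r) (i : G.V) : (u (merge he i).1 : R) * r = u i * r := by
      obtain ⟨d, rfl⟩ := hr
      have := apply_merge he (fun i => (u i : R) * c) (by rw [mul_comm, hue]) i
      rw [← mul_assoc, this, mul_assoc]
    refine ⟨fun i => u i.1, fun a => ?_⟩
    refine (mul_comm _ _).trans ((hmerge (hy a) _).trans ?_)
    rw [mul_comm]
    exact (hu a).trans (hmerge (hx a) _).symm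
  · rintro ⟨u, hu⟩
    refine ⟨fun i => u (merge he i), ?_, hu⟩
    simp only [merge_source_eq_merge_target, mul_comm]

theorem exists_gaugeRel_extendBy (he : G.s e ≠ G.t e) {x : G.E → R} {c : R} {w : Rˣ}
    (hx : x e = c * w) : ∃ y : {a : G.E // a ≠ e} → R, GaugeRel G R x (extendBy c y) := by
  classical
  let u : G.V → Rˣ := Function.update 1 (G.t e) w⁻¹
  refine ⟨fun a => u (G.t a.1) * x a.1 * ((u (G.s a.1))⁻¹ : Rˣ), u,
    (forall_edge_iff e).2 ⟨?_, ?_⟩⟩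
  · simp [u, he, hx, mul_comm c]
  · exact fun a => extendBy_coe a

theorem connectedReps_update_succ [DecidableEq G.E] :
    G.connectedReps t (Function.update m e (m e + 1)) =
      G.connectedReps t m ∩ {x | t ^ (m e + 1) ∣ x e} := by
  ext x
  have hdvd : t ^ (m e + 1) ∣ x e → t ^ m e ∣ x e := (pow_dvd_pow t (Nat.le_succ _)).trans
  have hne (a : {a : G.E // a ≠ e}) : Function.update m e (m e + 1) a.1 = m a.1 :=
    Function.update_of_ne a.2 _ _
  simp only [Set.mem_inter_iff, mem_connectedReps, forall_edge_iff e, Function.update_self, hne,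
    Set.mem_ofPred_eq]
  tauto

variable [IsLocalRing R] {α : ℕ}

theorem image_gaugeClass_sdiff (ht : IsUniformizer t α) (he : G.s e ≠ G.t e) (hme : m e < α) :
    gaugeClass '' (G.connectedReps t m \ {x | t ^ (m e + 1) ∣ x e}) =
      (fun x => gaugeClass (extendBy (t ^ m e) x)) ''
        (G.contract he).connectedReps t (fun a => m a.1) := by
  have htm : t ^ m e ≠ 0 := fun h => hme.not_ge ((ht.pow_eq_zero_iff _).1 h)
  ext o
  constructor
  · rintro ⟨x, ⟨hx, hxe⟩, rfl⟩
    obtain ⟨w, hw⟩ := ht.exists_eq_pow_mul_unit (hx.1 e) hxe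
    obtain ⟨y, hxy⟩ := exists_gaugeRel_extendBy he hw
    exact ⟨y, (extendBy_mem_connectedReps_iff_of_ne_zero he htm).1
      ((mem_connectedReps_iff_of_gaugeRel hxy).1 hx), (gaugeClass_eq_iff.2 hxy).symm⟩
  · rintro ⟨y, hy, rfl⟩
    refine ⟨_, ⟨(extendBy_mem_connectedReps_iff_of_ne_zero he htm).2 hy, fun hye => ?_⟩, rfl⟩
    rw [Set.mem_ofPred_eq, extendBy_self] at hye
    exact ht.not_pow_succ_dvd_pow hme hye

theorem classCount_of_not_loop [Finite R] [DecidableEq G.E] (ht : IsUniformizer t α)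
    (he : G.s e ≠ G.t e) (hme : m e < α) (hmin : ∀ a, m e ≤ m a) :
    G.classCount t m = (G.contract he).classCount t (fun a => m a.1) +
      G.classCount t (Function.update m e (m e + 1)) := by
  have hdisj : Disjoint (gaugeClass '' (G.connectedReps t m \ {x : G.E → R | t ^ (m e + 1) ∣ x e}))
      (gaugeClass '' (G.connectedReps t m ∩ {x : G.E → R | t ^ (m e + 1) ∣ x e})) := by
    rw [Set.disjoint_left]
    rintro _ ⟨x, ⟨-, hx⟩, rfl⟩ ⟨y, ⟨-, hy⟩, hxy⟩
    exact hx ((dvd_iff_of_gaugeRel (gaugeClass_eq_iff.1 hxy) _ _).1 hy)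
  have hcontract : ∀ x ∈ (G.contract he).connectedReps t (fun a => m a.1),
      ∀ y ∈ (G.contract he).connectedReps t (fun a => m a.1),
      gaugeClass (extendBy (t ^ m e) x) = gaugeClass (extendBy (t ^ m e) y) ↔
        gaugeClass x = gaugeClass y := fun x hx y hy => by
    rw [gaugeClass_eq_iff, gaugeClass_eq_iff]
    exact gaugeRel_extendBy_iff_of_dvd he (fun a => (pow_dvd_pow t (hmin a.1)).trans (hx.1 a))
      fun a => (pow_dvd_pow t (hmin a.1)).trans (hy.1 a)
  simp only [classCount]
  rw [connectedReps_update_succ, ← ncard_image_eq_of_eq_iff_eq hcontract,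
    ← image_gaugeClass_sdiff ht he hme, ← Set.ncard_union_eq hdisj, ← Set.image_union,
    Set.sdiff_union_inter]

end Contract

end Orbits

section CountingPolynomial

open Polynomial

variable {G : FinQuiver} {α : ℕ}

/-- The polynomial `P` computes `G.classCount t m` from the size of the residue field, for all
finite chain rings of length `α` with uniformizer `t`. -/
def IsCountingPolynomial (G : FinQuiver) (α : ℕ) (m : G.E → ℕ) (P : ℕ[X]) : Prop :=
  ∀ (R : Type) [CommRing R] [Finite R] [IsLocalRing R] (t : R), IsUniformizer t α →
    G.classCount t m = P.eval (Nat.card (IsLocalRing.ResidueField R))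

theorem exists_isCountingPolynomial_of_le {m : G.E → ℕ} (hm : ∀ a, α ≤ m a) :
    ∃ P, IsCountingPolynomial G α m P := by
  by_cases hconn : (G.restrictE ∅).Connected
  · refine ⟨1, fun R _ _ _ t ht => ?_⟩
    have : G.connectedReps t m = {0} := Set.ext fun x => by
      simp [mem_connectedReps_iff_of_pow_eq_zero, ht.pow_eq_zero_iff, hm, hconn]
    simp [classCount, this]
  · refine ⟨0, fun R _ _ _ t ht => ?_⟩
    have : G.connectedReps t m = ∅ := Set.ext fun x => by
      simp [mem_connectedReps_iff_of_pow_eq_zero, ht.pow_eq_zero_iff, hm, hconn]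
    simp [classCount, this]

theorem IsCountingPolynomial.of_deleteEdge {m : G.E → ℕ} {e : G.E} (he : G.s e = G.t e) {P : ℕ[X]}
    (hP : IsCountingPolynomial (G.deleteEdge e) α (fun a : {a : G.E // a ≠ e} => m a.1) P) :
    IsCountingPolynomial G α m (X ^ (α - m e) * P) := fun R _ _ _ t ht => by
  rw [classCount_of_loop he, ht.ncard_setOf_pow_dvd, hP R t ht, eval_mul, eval_pow, eval_X]

theorem IsCountingPolynomial.of_contract [DecidableEq G.E] {m : G.E → ℕ} {e : G.E}
    (he : G.s e ≠ G.t e) (hme : m e < α) (hmin : ∀ a, m e ≤ m a) {P P' : ℕ[X]}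
    (hP : IsCountingPolynomial (G.contract he) α (fun a : {a : G.E // a ≠ e} => m a.1) P)
    (hP' : IsCountingPolynomial G α (Function.update m e (m e + 1)) P') :
    IsCountingPolynomial G α m (P + P') := fun R _ _ _ t ht => by
  rw [classCount_of_not_loop ht he hme hmin, hP R t ht, hP' R t ht, eval_add]

theorem exists_isCountingPolynomial (G : FinQuiver) (α : ℕ) (m : G.E → ℕ) :
    ∃ P, IsCountingPolynomial G α m P := by
  classical
  induction h : ∑ a, (α - m a + 1) using Nat.strong_induction_on generalizing G m with
  | _ n ih =>
  subst h
  by_cases hm : ∀ a, α ≤ m a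
  · exact exists_isCountingPolynomial_of_le hm
  push Not at hm
  obtain ⟨b, hb⟩ := hm
  have : Nonempty G.E := ⟨b⟩
  obtain ⟨e, hmin⟩ := Finite.exists_min m
  have hme : m e < α := (hmin b).trans_lt hb
  have hremove : ∑ a : {a : G.E // a ≠ e}, (α - m a.1 + 1) < ∑ a, (α - m a + 1) := by
    rw [Fintype.sum_eq_add_sum_subtype_ne _ e]
    omega
  by_cases he : G.s e = G.t e
  · obtain ⟨P, hP⟩ := ih _ hremove (G.deleteEdge e) (fun a : {a : G.E // a ≠ e} => m a.1)
      (Fintype.sum_equiv (.refl _) _ _ fun _ => rfl)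
    exact ⟨_, hP.of_deleteEdge he⟩
  · have hraise : ∑ a, (α - Function.update m e (m e + 1) a + 1) < ∑ a, (α - m a + 1) := by
      refine Finset.sum_lt_sum (fun a _ => ?_) ⟨e, Finset.mem_univ e, ?_⟩
      · obtain rfl | hae := eq_or_ne a e
        · rw [Function.update_self]; omega
        · rw [Function.update_of_ne hae]
      · rw [Function.update_self]; omega
    obtain ⟨P, hP⟩ := ih _ hremove (G.contract he) (fun a => m a.1)
      (Fintype.sum_equiv (.refl _) _ _ fun _ => rfl)
    obtain ⟨P', hP'⟩ := ih _ hraise G _ rfl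
    exact ⟨_, hP.of_contract he hme hmin hP'⟩

end CountingPolynomial

end FinQuiver

section TruncRing

open Polynomial

variable (F : Type) [Field F] {α : ℕ}

theorem tvar_pow_eq_zero_iff (m : ℕ) : tvar F α ^ m = 0 ↔ α ≤ m := by
  rw [tvar, ← map_pow, Ideal.Quotient.eq_zero_iff_dvd, pow_dvd_pow_iff X_ne_zero not_isUnit_X]

/-- The reduction `F[t]/(t^α) → F` modulo `t`, for `α ≥ 1`. -/
noncomputable def truncRingReduction (hα : 1 ≤ α) : TruncRing F α →+* F :=
  Ideal.Quotient.lift _ constantCoeff fun p hp => by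
    rw [constantCoeff_apply, ← X_dvd_iff]
    exact (dvd_pow_self X (Nat.one_le_iff_ne_zero.1 hα)).trans (Ideal.mem_span_singleton.1 hp)

theorem truncRingReduction_surjective (hα : 1 ≤ α) :
    Function.Surjective (truncRingReduction F hα) :=
  Ideal.Quotient.lift_surjective_of_surjective _ _ constantCoeff_surjective

theorem ker_truncRingReduction (hα : 1 ≤ α) :
    RingHom.ker (truncRingReduction F hα) = Ideal.span {tvar F α} := by
  have hker : RingHom.ker (constantCoeff (R := F)) = Ideal.span {X} := by
    ext p
    rw [RingHom.mem_ker, constantCoeff_apply, Ideal.mem_span_singleton, X_dvd_iff]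
  refine (Ideal.ker_quotient_lift _ _).trans ?_
  rw [hker, Ideal.map_span, Set.image_singleton, tvar]

theorem isLocalRing_truncRing (hα : 1 ≤ α) : IsLocalRing (TruncRing F α) := by
  have hmax := RingHom.ker_isMaximal_of_surjective _ (truncRingReduction_surjective F hα)
  refine .of_unique_max_ideal ⟨_, hmax, fun I hI => (hmax.eq_of_le hI.ne_top ?_).symm⟩
  rw [ker_truncRingReduction, Ideal.span_singleton_le_iff_mem]
  refine hI.isPrime.mem_of_pow_mem α ?_
  rw [(tvar_pow_eq_zero_iff F α).2 le_rfl]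
  exact I.zero_mem

theorem isUniformizer_tvar [IsLocalRing (TruncRing F α)] (hα : 1 ≤ α) :
    IsUniformizer (tvar F α) α where
  maximalIdeal_eq := by
    rw [← ker_truncRingReduction F hα,
      IsLocalRing.ker_eq_maximalIdeal _ (truncRingReduction_surjective F hα)]
  pow_eq_zero_iff := tvar_pow_eq_zero_iff F

theorem card_residueField_truncRing [IsLocalRing (TruncRing F α)] (hα : 1 ≤ α) :
    Nat.card (IsLocalRing.ResidueField (TruncRing F α)) = Nat.card F := by
  have hsurj := truncRingReduction_surjective F hα
  exact Nat.card_congr ((Ideal.quotEquivOfEq (IsLocalRing.ker_eq_maximalIdeal _ hsurj).symm).trans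
    (RingHom.quotientKerEquivOfSurjective hsurj)).toEquiv

instance isPrincipalIdealRing_truncRing : IsPrincipalIdealRing (TruncRing F α) :=
  .of_surjective (Ideal.Quotient.mk _) Ideal.Quotient.mk_surjective

instance finite_truncRing [Finite F] : Finite (TruncRing F α) :=
  have := (monic_X_pow (R := F) α).finite_quotient
  Module.finite_of_finite F

end TruncRing

open FinQuiver in
/-- The hypotheses on `R` describe the finite chain rings of length `α`, such as `𝔽_q[t]/(t^α)` and
`ℤ/p^α`. -/
theorem toric_kac_polynomial_positivity_general (G : FinQuiver) (α : ℕ) :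
    ∃ P : Polynomial ℤ, (∀ n : ℕ, 0 ≤ P.coeff n) ∧
      ∀ (R : Type) [CommRing R] [Finite R] [IsLocalRing R] [IsPrincipalIdealRing R],
        nilpotencyClass (IsLocalRing.maximalIdeal R) = α →
          (KacCount G R : ℤ) = P.eval (Nat.card (IsLocalRing.ResidueField R) : ℤ) := by
  obtain ⟨P, hP⟩ := exists_isCountingPolynomial G α 0
  refine ⟨P.map (Nat.castRingHom ℤ), fun n => by simp, fun R _ _ _ _ hα => ?_⟩
  obtain ⟨t, ht⟩ := exists_isUniformizer R
  rw [kacCount_eq_classCount t, hP R t (hα ▸ ht), Polynomial.eval_natCast_map,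
    eq_natCast, Nat.cast_id]

/-- positivity of toric Kac polynomials of quivers with multiplicities.
Let `Q` be a finite quiver and `α ≥ 1` an integer.  There exists a polynomial
`P ∈ ℤ[X]` with non-negative coefficients such that for every prime power `q`
(i.e. every finite field `F` of cardinality `q`, with `R = 𝔽_q[t]/(t^α)`),
`A_{(Q,α),1̲}(q) = P(q)`. -/
theorem toric_kac_polynomial_positivity (G : FinQuiver) (α : ℕ) (hα : 1 ≤ α) :
    ∃ P : Polynomial ℤ, (∀ n : ℕ, 0 ≤ P.coeff n) ∧
      ∀ (F : Type) [Field F] [Fintype F],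
        (KacCount G (TruncRing F α) : ℤ) = P.eval (Fintype.card F : ℤ) := by
  obtain ⟨P, hnonneg, hP⟩ := toric_kac_polynomial_positivity_general G α
  refine ⟨P, hnonneg, fun F _ _ => ?_⟩
  have := isLocalRing_truncRing F hα
  rw [hP _ (isUniformizer_tvar F hα).nilpotencyClass_maximalIdeal,
    card_residueField_truncRing F hα, Nat.card_eq_fintype_card]
end
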